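/- Let n > 4, let L = H(n) over ℂ with its ℤ-grading L = ⊕_{j=−1}^{n−3} L_j, and let f ∈ BDer(L)_i be a super-biderivation of ℤ-degree i. If i ≠ 0, then f is the zero map. -/

import Mathlib

open scoped BigOperators

noncomputable section

namespace CartanSuper

/-- Coordinates of the exterior algebra `Λ(n)` with respect to the monomial basis
`{x_S : S ⊆ {1,…,n}}`. -/
abbrev Lambda (n : ℕ) := Finset (Fin n) → ℂ

/-- Endomorphism algebra of `Λ(n)`. -/
abbrev E (n : ℕ) := Module.End ℂ (Lambda n)

variable (n : ℕ)

/-- `(−1)^k`. -/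
def msign (k : ℕ) : ℂ := (-1 : ℂ) ^ k

/-- The basis monomial `x_S = x_{i₁}⋯x_{i_k}` (indices in increasing order). -/
def mono (S : Finset (Fin n)) : Lambda n := fun T => if T = S then 1 else 0

/-- Number of inversions between `S` and `T`. -/
def inversions (S T : Finset (Fin n)) : ℕ := ((S ×ˢ T).filter fun p => p.2 < p.1).card

/-- The multiplication of `Λ(n)` in coordinates:
`x_S · x_T = (−1)^{inversions} x_{S ∪ T}` for disjoint `S, T` and `0` otherwise. -/
def lmulFun (f g : Lambda n) : Lambda n :=
  fun U => ∑ S ∈ U.powerset, msign (inversions n S (U \ S)) * f S * g (U \ S)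

/-- Left multiplication by an element of `Λ(n)`, as a linear map `Λ(n) →ₗ End Λ(n)`. -/
def mulOp : Lambda n →ₗ[ℂ] E n where
  toFun f :=
    { toFun := lmulFun n f
      map_add' := by
        intro g h; funext U
        simp [lmulFun, mul_add, Finset.sum_add_distrib]
      map_smul' := by
        intro c g; funext U
        simp only [lmulFun, Pi.smul_apply, smul_eq_mul, RingHom.id_apply, Finset.mul_sum]
        exact Finset.sum_congr rfl (by intros; ring) }
  map_add' := by
    intro f g; apply LinearMap.ext; intro h; funext U
    show lmulFun n (f + g) h U = lmulFun n f h U + lmulFun n g h U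
    simp only [lmulFun]
    rw [← Finset.sum_add_distrib]
    exact Finset.sum_congr rfl (by intros; simp [Pi.add_apply]; ring)
  map_smul' := by
    intro c f; apply LinearMap.ext; intro h; funext U
    show lmulFun n (c • f) h U = (c • lmulFun n f h) U
    simp only [lmulFun, Pi.smul_apply, smul_eq_mul, Finset.mul_sum]
    exact Finset.sum_congr rfl (by intros; ring)

/-- The superderivation `∂_i` of `Λ(n)`, in coordinates. -/
def pd (i : Fin n) : E n where
  toFun f := fun S =>
    if i ∈ S then 0 else msign (S.filter (· < i)).card * f (insert i S)
  map_add' := by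
    intro f g; funext S; by_cases h : i ∈ S <;> simp [h, mul_add]
  map_smul' := by
    intro c f; funext S; by_cases h : i ∈ S <;> simp [h] <;> ring

/-- The parity operator `σ` of `Λ(n)`: `σ(x_S) = (−1)^{|S|} x_S`. -/
def par : E n where
  toFun f := fun S => msign S.card * f S
  map_add' := by intro f g; funext S; simp [mul_add]
  map_smul' := by intro c f; funext S; simp; ring

/-- The super-commutator `[D,F] = D∘F − (−1)^{|D||F|} F∘D`, extended bilinearly to all of
`End Λ(n)` using the parity operator `σ`
(for homogeneous `D`, `σ∘D∘σ = (−1)^{|D|} D`). -/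
def sbFun (D F : E n) : E n :=
  D * F - (2:ℂ)⁻¹ • ((F + par n * F * par n) * D + (F - par n * F * par n) * (par n * D * par n))

/-- The super-commutator as a bilinear map. -/
def sbL : E n →ₗ[ℂ] E n →ₗ[ℂ] E n :=
  LinearMap.mk₂ ℂ (sbFun n)
    (fun D D' F => by
      simp only [sbFun, add_mul, sub_mul, mul_add, mul_sub, smul_mul_assoc, mul_smul_comm,
        smul_add, smul_sub]
      module)
    (fun c D F => by
      simp only [sbFun, add_mul, sub_mul, mul_add, mul_sub, smul_mul_assoc, mul_smul_comm,
        smul_add, smul_sub]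
      module)
    (fun D F F' => by
      simp only [sbFun, add_mul, sub_mul, mul_add, mul_sub, smul_mul_assoc, mul_smul_comm,
        smul_add, smul_sub]
      module)
    (fun c D F => by
      simp only [sbFun, add_mul, sub_mul, mul_add, mul_sub, smul_mul_assoc, mul_smul_comm,
        smul_add, smul_sub]
      module)

/-- Shorthand for the super-commutator. -/
def sb (D F : E n) : E n := sbL n D F

/-- The ℤ₂-homogeneous component of `Λ(n)` of parity `p`. -/
def lpar (p : ZMod 2) : Submodule ℂ (Lambda n) where
  carrier := {f | ∀ S : Finset (Fin n), (S.card : ZMod 2) ≠ p → f S = 0}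
  add_mem' := by intro f g hf hg S hS; simp [Pi.add_apply, hf S hS, hg S hS]
  zero_mem' := by intro S hS; rfl
  smul_mem' := by intro c f hf S hS; simp [Pi.smul_apply, hf S hS]

/-- The ℤ-homogeneous component of `Λ(n)` of degree `m` (zero unless `0 ≤ m ≤ n`). -/
def ldeg (m : ℤ) : Submodule ℂ (Lambda n) where
  carrier := {f | ∀ S : Finset (Fin n), (S.card : ℤ) ≠ m → f S = 0}
  add_mem' := by intro f g hf hg S hS; simp [Pi.add_apply, hf S hS, hg S hS]
  zero_mem' := by intro S hS; rfl
  smul_mem' := by intro c f hf S hS; simp [Pi.smul_apply, hf S hS]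

/-- Endomorphisms of `Λ(n)` that are ℤ₂-homogeneous of parity `p`. -/
def epar (p : ZMod 2) : Submodule ℂ (E n) where
  carrier := {D | ∀ (q : ZMod 2), ∀ f ∈ lpar n q, D f ∈ lpar n (q + p)}
  add_mem' := by
    intro D F hD hF q f hf
    simpa [LinearMap.add_apply] using (lpar n (q + p)).add_mem (hD q f hf) (hF q f hf)
  zero_mem' := by intro q f hf; simpa using (lpar n (q + p)).zero_mem
  smul_mem' := by
    intro c D hD q f hf
    simpa [LinearMap.smul_apply] using (lpar n (q + p)).smul_mem c (hD q f hf)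

/-- Endomorphisms of `Λ(n)` that are ℤ-homogeneous of degree `d`. -/
def edeg (d : ℤ) : Submodule ℂ (E n) where
  carrier := {D | ∀ (m : ℤ), ∀ f ∈ ldeg n m, D f ∈ ldeg n (m + d)}
  add_mem' := by
    intro D F hD hF m f hf
    simpa [LinearMap.add_apply] using (ldeg n (m + d)).add_mem (hD m f hf) (hF m f hf)
  zero_mem' := by intro m f hf; simpa using (ldeg n (m + d)).zero_mem
  smul_mem' := by
    intro c D hD m f hf
    simpa [LinearMap.smul_apply] using (ldeg n (m + d)).smul_mem c (hD m f hf)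

/-- The linear map `(f₁,…,f_n) ↦ ∑ᵢ fᵢ ∂ᵢ`. -/
def Wmap : (Fin n → Lambda n) →ₗ[ℂ] E n where
  toFun F := ∑ i, mulOp n (F i) * pd n i
  map_add' := by
    intro F G
    simp only [Pi.add_apply, map_add, add_mul, Finset.sum_add_distrib]
  map_smul' := by
    intro c F
    simp only [RingHom.id_apply, Pi.smul_apply, map_smul, smul_mul_assoc, Finset.smul_sum]

/-- The divergence `(f₁,…,f_n) ↦ ∑ᵢ ∂ᵢ(fᵢ)`. -/
def divMap : (Fin n → Lambda n) →ₗ[ℂ] Lambda n where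
  toFun F := ∑ i, pd n i (F i)
  map_add' := by
    intro F G
    simp only [Pi.add_apply, map_add, Finset.sum_add_distrib]
  map_smul' := by
    intro c F
    simp only [RingHom.id_apply, Pi.smul_apply, map_smul, Finset.smul_sum]

/-- The Witt type Lie superalgebra `W(n) = {∑ fᵢ∂ᵢ : fᵢ ∈ Λ(n)}`. -/
def Wn : Submodule ℂ (E n) := LinearMap.range (Wmap n)

/-- Divergence-free coefficient tuples. -/
def divFree : Submodule ℂ (Fin n → Lambda n) := LinearMap.ker (divMap n)

/-- The special type Lie superalgebra `S(n) = {∑ fᵢ∂ᵢ : ∑ ∂ᵢ(fᵢ) = 0}`. -/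
def Sn : Submodule ℂ (E n) := (divFree n).map (Wmap n)

/-- The top monomial `ω = x₁x₂⋯x_n`. -/
def omegaTop : Lambda n := mono n Finset.univ

/-- `1 − x₁x₂⋯x_n`. -/
def oneM : Lambda n := mono n ∅ - omegaTop n

/-- Multiplication of every coefficient by `1 − x₁⋯x_n`. -/
def oneMScale : (Fin n → Lambda n) →ₗ[ℂ] (Fin n → Lambda n) :=
  LinearMap.pi fun i => (mulOp n (oneM n)) ∘ₗ LinearMap.proj i

/-- The Lie superalgebra `S̃(n) = {(1−x₁⋯x_n)∑ fᵢ∂ᵢ : ∑ ∂ᵢ(fᵢ) = 0}` (`n` even). -/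
def Stn : Submodule ℂ (E n) := (divFree n).map (Wmap n ∘ₗ oneMScale n)

/-- The conjugate index `i'`. -/
def cidx (i : Fin n) : Fin n :=
  ⟨if i.val < n / 2 then i.val + n / 2 else if i.val < 2 * (n / 2) then i.val - n / 2 else i.val,
   by have := i.isLt; split_ifs <;> omega⟩

/-- The linear map `f ↦ D_H(f) = (−1)^{|f|} ∑ᵢ ∂ᵢ(f)∂_{i'}` (the sign is implemented by the
parity operator `σ`, so that this is a single linear map agreeing with `D_H` on homogeneous
elements). -/
def DHmap : Lambda n →ₗ[ℂ] E n where
  toFun f := ∑ i, mulOp n (pd n i (par n f)) * pd n (cidx n i)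
  map_add' := by
    intro f g
    simp only [map_add, add_mul, Finset.sum_add_distrib]
  map_smul' := by
    intro c f
    simp only [RingHom.id_apply, map_smul, smul_mul_assoc, Finset.smul_sum]

/-- Evaluation of the top coefficient. -/
def evalTop : Lambda n →ₗ[ℂ] ℂ := LinearMap.proj Finset.univ

/-- The Hamiltonian Lie superalgebra `H(n) = {D_H(f) : f ∈ ⊕_{i=0}^{n−1} Λ(n)_i}`. -/
def Hn : Submodule ℂ (E n) := (LinearMap.ker (evalTop n)).map (DHmap n)

/-- `H̃(n) = {D_H(f) : f ∈ Λ(n)}`. -/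
def HtN : Submodule ℂ (E n) := LinearMap.range (DHmap n)

/-- The degree derivation `𝒞 = ∑ᵢ xᵢ∂ᵢ`. -/
def CC : E n := ∑ i, mulOp n (mono n {i}) * pd n i

/-- The span of the diagonal elements `xᵢ∂ᵢ`. -/
def diagSpan : Submodule ℂ (E n) :=
  Submodule.span ℂ (Set.range fun i : Fin n => mulOp n (mono n {i}) * pd n i)

/-- The four families of Cartan type Lie superalgebras. -/
inductive CT | W | S | St | H
deriving DecidableEq

/-- Validity of the parameter `n` for each family. -/
def CT.valid : CT → ℕ → Prop
  | .W, n => 4 ≤ n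
  | .S, n => 4 ≤ n
  | .St, n => 4 ≤ n ∧ Even n
  | .H, n => 4 < n

/-- The Cartan type Lie superalgebra `L` itself. -/
def CT.algebra : CT → (n : ℕ) → Submodule ℂ (E n)
  | .W, n => Wn n
  | .S, n => Sn n
  | .St, n => Stn n
  | .H, n => Hn n

/-- The extended algebra `L'`: `L' = L` for `W(n)` and `S̃(n)`, `L' = S(n) ⊕ ℂ𝒞` for `S(n)`,
and `L' = H̃(n) ⊕ ℂ𝒞` for `H(n)`. -/
def CT.prime : CT → (n : ℕ) → Submodule ℂ (E n)
  | .W, n => Wn n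
  | .S, n => Sn n ⊔ Submodule.span ℂ {CC n}
  | .St, n => Stn n
  | .H, n => HtN n ⊔ Submodule.span ℂ {CC n}

/-- The top degree `ξ_L` of the ℤ-grading. -/
def CT.xi : CT → (n : ℕ) → ℤ
  | .W, n => (n : ℤ) - 1
  | .S, n => (n : ℤ) - 2
  | .St, n => (n : ℤ) - 2
  | .H, n => (n : ℤ) - 3

/-- The ℤ-grading component `L_j = L ∩ W(n)_j`; for `S̃(n)` the component of degree `−1`
is `span{(1−x₁⋯x_n)∂ᵢ}` instead. -/
def CT.grade (t : CT) (n : ℕ) (j : ℤ) : Submodule ℂ (E n) :=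
  match t with
  | .St =>
      if j = -1 then
        Submodule.span ℂ (Set.range fun i : Fin n => mulOp n (oneM n) * pd n i)
      else Stn n ⊓ edeg n j
  | t => t.algebra n ⊓ edeg n j

/-- The ℤ-grading component `L'_j` of the extended algebra `L'`. -/
def CT.grade' (t : CT) (n : ℕ) (j : ℤ) : Submodule ℂ (E n) :=
  match t with
  | .St => CT.grade .St n j
  | t => t.prime n ⊓ edeg n j

/-- The standard Cartan subalgebra `H_L` of `L`: the part of the diagonal
`span{xᵢ∂ᵢ}` lying in `L`. -/
def CT.cartan (t : CT) (n : ℕ) : Submodule ℂ (E n) := t.algebra n ⊓ diagSpan n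

/-- The weight space of `M ⊆ End Λ(n)` of weight `μ ∈ H_L^*` under the adjoint action
of the standard Cartan subalgebra of `L`. -/
def wtsp (t : CT) (n : ℕ) (M : Submodule ℂ (E n)) (μ : Module.Dual ℂ (t.cartan n)) :
    Submodule ℂ (E n) where
  carrier := {x | x ∈ M ∧ ∀ h : t.cartan n, sbL n h x = μ h • x}
  add_mem' := by
    rintro x y ⟨hx, hx'⟩ ⟨hy, hy'⟩
    exact ⟨M.add_mem hx hy, fun h => by simp [map_add, hx' h, hy' h, smul_add]⟩
  zero_mem' := ⟨M.zero_mem, fun h => by simp⟩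
  smul_mem' := by
    rintro c x ⟨hx, hx'⟩
    exact ⟨M.smul_mem c hx, fun h => by simp [map_smul, hx' h, smul_comm c]⟩

/-- The set of roots of `M` with respect to the standard Cartan subalgebra of `L`:
the nonzero weights with nonzero weight space. -/
def CT.roots (t : CT) (n : ℕ) (M : Submodule ℂ (E n)) : Set (Module.Dual ℂ (t.cartan n)) :=
  {ε | ε ≠ 0 ∧ wtsp t n M ε ≠ ⊥}

/-- The sign `(−1)^p` for `p ∈ ℤ₂`. -/
def sgn (p : ZMod 2) : ℂ := (-1 : ℂ) ^ p.val

/-- `f` is a super-biderivation of `L` of ℤ₂-degree `pf`: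
a bilinear map with `f(L_α, L_β) ⊆ L_{α+β+pf}` satisfying
`f([x,y],z) = (−1)^{|x||f|}[x,f(y,z)] + (−1)^{|y||z|}[f(x,z),y]` and
`f(x,[y,z]) = [f(x,y),z] + (−1)^{(|f|+|x|)|y|}[y,f(x,z)]` for homogeneous `x,y,z ∈ L`.
(The bilinear map is given as a bilinear map on the ambient space `End Λ(n)`;
only its restriction to `L` is relevant.) -/
structure IsSuperBider (L : Submodule ℂ (E n)) (pf : ZMod 2)
    (f : E n →ₗ[ℂ] E n →ₗ[ℂ] E n) : Prop where
  maps : ∀ (α β : ZMod 2), ∀ x ∈ L ⊓ epar n α, ∀ y ∈ L ⊓ epar n β,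
    f x y ∈ L ⊓ epar n (α + β + pf)
  eq1 : ∀ (α β γ : ZMod 2), ∀ x ∈ L ⊓ epar n α, ∀ y ∈ L ⊓ epar n β, ∀ z ∈ L ⊓ epar n γ,
    f (sbL n x y) z = sgn (α * pf) • sbL n x (f y z) + sgn (β * γ) • sbL n (f x z) y
  eq2 : ∀ (α β γ : ZMod 2), ∀ x ∈ L ⊓ epar n α, ∀ y ∈ L ⊓ epar n β, ∀ z ∈ L ⊓ epar n γ,
    f x (sbL n y z) = sbL n (f x y) z + sgn ((pf + α) * β) • sbL n y (f x z)

/-- `D` is a superderivation of `L` of ℤ₂-degree `p`: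
`D(L_α) ⊆ L_{α+p}` and `D([x,y]) = [D(x),y] + (−1)^{|D||x|}[x,D(y)]` for homogeneous
`x, y ∈ L`. (Given as a linear map on the ambient space `End Λ(n)`.) -/
structure IsSuperDer (L : Submodule ℂ (E n)) (p : ZMod 2)
    (D : E n →ₗ[ℂ] E n) : Prop where
  maps : ∀ (α : ZMod 2), ∀ x ∈ L ⊓ epar n α, D x ∈ L ⊓ epar n (α + p)
  leib : ∀ (α β : ZMod 2), ∀ x ∈ L ⊓ epar n α, ∀ y ∈ L ⊓ epar n β,
    D (sbL n x y) = sbL n (D x) y + sgn (p * α) • sbL n x (D y)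

/-- `f ∈ BDer(L)_ε`: the super-biderivation `f` has weight `ε ∈ H_L^*`, i.e.
`f(L_η, L_ζ) ⊆ L_{ε+η+ζ}` for all weights `η, ζ`. -/
def CT.HasWeight (t : CT) (n : ℕ) (f : E n →ₗ[ℂ] E n →ₗ[ℂ] E n)
    (ε : Module.Dual ℂ (t.cartan n)) : Prop :=
  ∀ (η ζ : Module.Dual ℂ (t.cartan n)),
    ∀ x ∈ wtsp t n (t.algebra n) η, ∀ y ∈ wtsp t n (t.algebra n) ζ,
      f x y ∈ wtsp t n (t.algebra n) (ε + η + ζ)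

/-- `f ∈ BDer(L)_i`: the super-biderivation `f` has ℤ-degree `i`, i.e.
`f(L_j, L_k) ⊆ L_{i+j+k}` for all `j, k ∈ ℤ`. -/
def CT.HasDeg (t : CT) (n : ℕ) (f : E n →ₗ[ℂ] E n →ₗ[ℂ] E n) (i : ℤ) : Prop :=
  ∀ (j k : ℤ), ∀ x ∈ t.grade n j, ∀ y ∈ t.grade n k, f x y ∈ t.grade n (i + j + k)

/-!
A super-biderivation `f` is a superderivation in each argument, so expanding `f([x,u],[y,v])` in
both orders expresses `[f(x,y),[u,v]]` through `[[x,y],f(u,v)]`, `[f(u,y),[x,v]]` and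
`[f(x,v),[y,u]]`. Each of these can be made to vanish by choosing `u` and `v` with `[u,v]` a
prescribed element of degree `-1` or `0`, either because the brackets with `x` or `y` vanish or for
degree reasons. An element of degree at least `0` is detected by its brackets with `L₋₁`, and an
element of `L₋₁` by its brackets with `L₀`; hence `f(L₋₁, L₋₁) = 0` in every degree `i`, and
`f(L_j, L_k) = 0` propagates from the pairs with `i + j + k = -1` to all pairs. For `i > 0` such
pairs involve `L₋₁` twice or a zero component. For `i < 0` the same expansion, together with the
derivation rule when `i` is `-1` or `-2`, first gives `f(L₀, L_k) = 0`, and then, with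
`u, v ∈ L₀`, settles these pairs.
-/

section Signs

lemma msign_zero : msign 0 = 1 := pow_zero _

lemma msign_add (a b : ℕ) : msign (a + b) = msign a * msign b := pow_add _ _ _

lemma msign_succ (a : ℕ) : msign (a + 1) = -msign a := by simp [msign, pow_succ]

lemma msign_mul_self (a : ℕ) : msign a * msign a = 1 := by
  rw [msign, ← mul_pow, neg_one_mul, neg_neg, one_pow]

lemma msign_ne_zero (a : ℕ) : msign a ≠ 0 := pow_ne_zero _ (neg_ne_zero.2 one_ne_zero)

lemma sgn_natCast (k : ℕ) : sgn (k : ZMod 2) = msign k := by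
  rw [sgn, msign, ZMod.val_natCast, ← neg_one_pow_eq_pow_mod_two]

lemma sgn_add (a b : ZMod 2) : sgn (a + b) = sgn a * sgn b := by
  rw [← ZMod.natCast_zmod_val a, ← ZMod.natCast_zmod_val b, ← Nat.cast_add]
  simp only [sgn_natCast, msign_add]

lemma sgn_zero : sgn 0 = 1 := pow_zero _

lemma sgn_one : sgn 1 = -1 := pow_one _

lemma sgn_mul_self (a : ZMod 2) : sgn a * sgn a = 1 := by
  rw [← sgn_add, CharTwo.add_self_eq_zero, sgn_zero]

lemma sgn_ne_zero (a : ZMod 2) : sgn a ≠ 0 := pow_ne_zero _ (neg_ne_zero.2 one_ne_zero)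

lemma eq_zero_or_eq_one_of_zmod_two (a : ZMod 2) : a = 0 ∨ a = 1 := by
  decide +revert

end Signs

section ExteriorAlgebra

variable {n : ℕ}

lemma mono_self (S : Finset (Fin n)) : mono n S S = 1 := if_pos rfl

lemma mono_of_ne {S T : Finset (Fin n)} (h : T ≠ S) : mono n S T = 0 := if_neg h

lemma eq_sum_mono (f : Lambda n) : f = ∑ S, f S • mono n S := by
  funext T
  simp [mono]

lemma linearMap_ext_mono {M : Type*} [AddCommGroup M] [Module ℂ M] {A B : Lambda n →ₗ[ℂ] M}
    (h : ∀ S, A (mono n S) = B (mono n S)) : A = B := by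
  refine LinearMap.ext fun f => ?_
  rw [eq_sum_mono f, map_sum, map_sum]
  simp only [map_smul, h]

lemma mulOp_apply (f g : Lambda n) (U : Finset (Fin n)) :
    mulOp n f g U = ∑ S ∈ U.powerset, msign (inversions n S (U \ S)) * f S * g (U \ S) := rfl

lemma par_apply (f : Lambda n) (S : Finset (Fin n)) : par n f S = msign S.card * f S := rfl

lemma pd_apply_of_mem {i : Fin n} {S : Finset (Fin n)} (h : i ∈ S) (f : Lambda n) :
    pd n i f S = 0 := if_pos h

lemma pd_apply_of_notMem {i : Fin n} {S : Finset (Fin n)} (h : i ∉ S) (f : Lambda n) :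
    pd n i f S = msign (S.filter (· < i)).card * f (insert i S) := if_neg h

lemma par_par (f : Lambda n) : par n (par n f) = f := by
  funext S
  rw [par_apply, par_apply, ← mul_assoc, msign_mul_self, one_mul]

lemma par_mono (S : Finset (Fin n)) : par n (mono n S) = msign S.card • mono n S := by
  funext T
  obtain rfl | hT := eq_or_ne T S
  · rfl
  · simp only [par_apply, Pi.smul_apply, mono_of_ne hT, mul_zero, smul_zero]

lemma filter_lt_insert_self (i : Fin n) (S : Finset (Fin n)) :
    (insert i S).filter (· < i) = S.filter (· < i) := by
  rw [Finset.filter_insert, if_neg (lt_irrefl i)]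

lemma pd_mono_of_mem {i : Fin n} {S : Finset (Fin n)} (h : i ∈ S) :
    pd n i (mono n S) = msign (S.filter (· < i)).card • mono n (S.erase i) := by
  funext T
  by_cases hT : i ∈ T
  · have hTS : T ≠ S.erase i := by
      rintro rfl
      exact Finset.notMem_erase i S hT
    rw [pd_apply_of_mem hT, Pi.smul_apply, mono_of_ne hTS, smul_zero]
  · rw [pd_apply_of_notMem hT, Pi.smul_apply, smul_eq_mul]
    obtain rfl | hTS := eq_or_ne T (S.erase i)
    · rw [Finset.insert_erase h, mono_self, mono_self, ← filter_lt_insert_self,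
        Finset.insert_erase h]
    · have hTS' : insert i T ≠ S := by
        rintro rfl
        exact hTS (Finset.erase_insert hT).symm
      rw [mono_of_ne hTS, mono_of_ne hTS', mul_zero, mul_zero]

lemma pd_mono_of_notMem {i : Fin n} {S : Finset (Fin n)} (h : i ∉ S) : pd n i (mono n S) = 0 := by
  funext T
  by_cases hT : i ∈ T
  · exact pd_apply_of_mem hT _
  · have hTS : insert i T ≠ S := by
      rintro rfl
      exact h (Finset.mem_insert_self i T)
    rw [pd_apply_of_notMem hT, mono_of_ne hTS, mul_zero, Pi.zero_apply]

lemma pd_mono_insert {i : Fin n} {S : Finset (Fin n)} (h : i ∉ S) :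
    pd n i (mono n (insert i S)) = msign (S.filter (· < i)).card • mono n S := by
  rw [pd_mono_of_mem (Finset.mem_insert_self i S), filter_lt_insert_self, Finset.erase_insert h]

lemma pd_mono_single (i k : Fin n) : pd n i (mono n {k}) = if i = k then mono n ∅ else 0 := by
  split_ifs with h
  · subst h
    rw [← insert_empty_eq, pd_mono_insert (Finset.notMem_empty i), Finset.filter_empty,
      Finset.card_empty, msign_zero, one_smul]
  · exact pd_mono_of_notMem (by rwa [Finset.mem_singleton])

lemma pd_par (i : Fin n) (f : Lambda n) : pd n i (par n f) = -par n (pd n i f) := by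
  funext S
  rw [Pi.neg_apply, par_apply]
  by_cases h : i ∈ S
  · simp only [pd_apply_of_mem h, mul_zero, neg_zero]
  · simp only [pd_apply_of_notMem h, par_apply, Finset.card_insert_of_notMem h, msign_succ]
    ring

private lemma pd_pd_of_lt {i j : Fin n} (hij : i < j) (f : Lambda n) :
    pd n i (pd n j f) = -pd n j (pd n i f) := by
  funext S
  rw [Pi.neg_apply]
  by_cases hi : i ∈ S
  · by_cases hj : j ∈ S
    · rw [pd_apply_of_mem hi, pd_apply_of_mem hj, neg_zero]
    · rw [pd_apply_of_mem hi, pd_apply_of_notMem hj, pd_apply_of_mem (Finset.mem_insert_of_mem hi),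
        mul_zero, neg_zero]
  by_cases hj : j ∈ S
  · rw [pd_apply_of_mem hj, pd_apply_of_notMem hi, pd_apply_of_mem (Finset.mem_insert_of_mem hj),
      mul_zero, neg_zero]
  · have hji : j ∉ insert i S := by simp [hj, hij.ne']
    have hij' : i ∉ insert j S := by simp [hi, hij.ne]
    rw [pd_apply_of_notMem hi, pd_apply_of_notMem hj, pd_apply_of_notMem hji,
      pd_apply_of_notMem hij', Finset.insert_comm j i, Finset.filter_insert, Finset.filter_insert,
      if_pos hij, if_neg hij.not_gt, Finset.card_insert_of_notMem (by simp [hi]), msign_succ]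
    ring

lemma pd_pd (i j : Fin n) (f : Lambda n) : pd n i (pd n j f) = -pd n j (pd n i f) := by
  obtain hij | rfl | hij := lt_trichotomy i j
  · exact pd_pd_of_lt hij f
  · have hii : pd n i (pd n i f) = 0 := by
      funext S
      by_cases hi : i ∈ S
      · exact pd_apply_of_mem hi _
      · rw [pd_apply_of_notMem hi, pd_apply_of_mem (Finset.mem_insert_self i S), mul_zero,
          Pi.zero_apply]
    rw [hii, neg_zero]
  · rw [pd_pd_of_lt hij, neg_neg]

lemma eq_zero_of_pd_eq_zero {f : Lambda n} (h0 : f ∅ = 0) (h : ∀ i, pd n i f = 0) : f = 0 := by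
  funext S
  obtain rfl | ⟨i, hi⟩ := S.eq_empty_or_nonempty
  · exact h0
  · have := congrFun (h i) (S.erase i)
    rw [pd_apply_of_notMem (Finset.notMem_erase i S), Finset.insert_erase hi] at this
    exact (mul_eq_zero.1 this).resolve_left (msign_ne_zero _)

lemma inversions_eq_sum_card_left (S T : Finset (Fin n)) :
    inversions n S T = ∑ s ∈ S, (T.filter (· < s)).card := by
  simp only [inversions, Finset.card_filter, Finset.sum_product]

lemma inversions_eq_sum_card_right (S T : Finset (Fin n)) :
    inversions n S T = ∑ t ∈ T, (S.filter (t < ·)).card := by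
  simp only [inversions, Finset.card_filter, Finset.sum_product_right]

lemma msign_inversions_insert_left {i : Fin n} {S : Finset (Fin n)} (h : i ∉ S)
    (T : Finset (Fin n)) :
    msign (inversions n (insert i S) T)
      = msign (T.filter (· < i)).card * msign (inversions n S T) := by
  rw [inversions_eq_sum_card_left, inversions_eq_sum_card_left, Finset.sum_insert h, msign_add]

lemma msign_inversions_insert_right {i : Fin n} {T : Finset (Fin n)} (h : i ∉ T)
    (S : Finset (Fin n)) :
    msign (inversions n S (insert i T))
      = msign (S.filter (i < ·)).card * msign (inversions n S T) := by
  rw [inversions_eq_sum_card_right, inversions_eq_sum_card_right, Finset.sum_insert h, msign_add]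

lemma msign_card_of_notMem {i : Fin n} {S : Finset (Fin n)} (h : i ∉ S) :
    msign S.card = msign (S.filter (· < i)).card * msign (S.filter (i < ·)).card := by
  have hnot : S.filter (¬· < i) = S.filter (i < ·) :=
    Finset.filter_congr fun k hk =>
      not_lt.trans ⟨fun hik => lt_of_le_of_ne hik fun hik' => h (hik' ▸ hk), le_of_lt⟩
  rw [← Finset.card_filter_add_card_filter_not (s := S) (· < i), hnot, msign_add]

lemma msign_card_filter_sdiff {S U : Finset (Fin n)} (h : S ⊆ U) (p : Fin n → Prop)
    [DecidablePred p] :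
    msign (U.filter p).card = msign (S.filter p).card * msign ((U \ S).filter p).card := by
  rw [← msign_add, ← Finset.card_union_of_disjoint
    (Finset.disjoint_filter_filter Finset.disjoint_sdiff), ← Finset.filter_union,
    Finset.union_sdiff_of_subset h]

lemma mulOp_apply_insert {i : Fin n} {U : Finset (Fin n)} (hi : i ∉ U) (f g : Lambda n) :
    mulOp n f g (insert i U)
      = ∑ S ∈ U.powerset, (msign (S.filter (i < ·)).card * f S * g (insert i (U \ S))
          + msign ((U \ S).filter (· < i)).card * f (insert i S) * g (U \ S))
          * msign (inversions n S (U \ S)) := by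
  rw [mulOp_apply, Finset.sum_powerset_insert hi, ← Finset.sum_add_distrib]
  refine Finset.sum_congr rfl fun S hS => ?_
  have hiS : i ∉ S := fun h => hi (Finset.mem_powerset.1 hS h)
  have hiUS : i ∉ U \ S := fun h => hi (Finset.mem_sdiff.1 h).1
  rw [Finset.insert_sdiff_of_notMem _ hiS, Finset.insert_sdiff_insert,
    Finset.sdiff_insert_of_notMem hi, msign_inversions_insert_left hiS,
    msign_inversions_insert_right hiUS]
  ring

lemma pd_mulOp (i : Fin n) (f g : Lambda n) :
    pd n i (mulOp n f g) = mulOp n (pd n i f) g + mulOp n (par n f) (pd n i g) := by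
  funext U
  rw [Pi.add_apply]
  by_cases hi : i ∈ U
  · obtain ⟨V, hV, rfl⟩ : ∃ V, i ∉ V ∧ insert i V = U :=
      ⟨U.erase i, Finset.notMem_erase i U, Finset.insert_erase hi⟩
    rw [pd_apply_of_mem hi, mulOp_apply_insert hV, mulOp_apply_insert hV, ← Finset.sum_add_distrib,
      eq_comm]
    refine Finset.sum_eq_zero fun S hS => ?_
    have hiS : i ∉ S := fun h => hV (Finset.mem_powerset.1 hS h)
    have hiVS : i ∉ V \ S := fun h => hV (Finset.mem_sdiff.1 h).1
    simp only [pd_apply_of_mem (Finset.mem_insert_self _ _), pd_apply_of_notMem hiS,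
      pd_apply_of_notMem hiVS, par_apply, Finset.card_insert_of_notMem hiS, msign_succ,
      msign_card_of_notMem hiS]
    linear_combination (-(msign (S.filter (· < i)).card * msign (S.filter (i < ·)).card
      * f (insert i S) * g (insert i (V \ S)) * msign (inversions n S (V \ S))))
      * msign_mul_self ((V \ S).filter (· < i)).card
  · rw [pd_apply_of_notMem hi, mulOp_apply_insert hi, mulOp_apply, mulOp_apply,
      ← Finset.sum_add_distrib, Finset.mul_sum]
    refine Finset.sum_congr rfl fun S hS => ?_
    have hiS : i ∉ S := fun h => hi (Finset.mem_powerset.1 hS h)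
    have hiUS : i ∉ U \ S := fun h => hi (Finset.mem_sdiff.1 h).1
    rw [pd_apply_of_notMem hiS, pd_apply_of_notMem hiUS, par_apply, msign_card_of_notMem hiS,
      msign_card_filter_sdiff (Finset.mem_powerset.1 hS)]
    linear_combination (msign (S.filter (· < i)).card * f (insert i S) * g (U \ S)
      * msign (inversions n S (U \ S))) * msign_mul_self ((U \ S).filter (· < i)).card

lemma mulOp_apply_empty (f g : Lambda n) : mulOp n f g ∅ = f ∅ * g ∅ := by
  rw [mulOp_apply, Finset.powerset_empty, Finset.sum_singleton, Finset.sdiff_self,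
    inversions_eq_sum_card_left, Finset.sum_empty, msign_zero, one_mul]

lemma mulOp_mono_empty_right (f : Lambda n) : mulOp n f (mono n ∅) = f := by
  funext U
  rw [mulOp_apply, Finset.sum_eq_single_of_mem U (Finset.mem_powerset_self U), Finset.sdiff_self,
    mono_self, inversions_eq_sum_card_right, Finset.sum_empty, msign_zero, one_mul, mul_one]
  intro S hS hSU
  have hSU' : U \ S ≠ ∅ := fun h =>
    hSU ((Finset.mem_powerset.1 hS).antisymm (Finset.sdiff_eq_empty_iff_subset.1 h))
  rw [mono_of_ne hSU', mul_zero]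

lemma mono_empty_mulOp (g : Lambda n) : mulOp n (mono n ∅) g = g := by
  funext U
  rw [mulOp_apply, Finset.sum_eq_single_of_mem ∅ (Finset.empty_mem_powerset U), mono_self,
    inversions_eq_sum_card_left, Finset.sum_empty, msign_zero, one_mul, one_mul, Finset.sdiff_empty]
  intro S _ hS
  rw [mono_of_ne hS, mul_zero, zero_mul]

end ExteriorAlgebra

section HamiltonianFields

variable {n : ℕ}

lemma cidx_cidx (i : Fin n) : cidx n (cidx n i) = i := by
  have := i.isLt
  simp only [cidx, Fin.ext_iff]
  split_ifs <;> omega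

lemma DHmap_apply (f g : Lambda n) :
    DHmap n f g = ∑ i, mulOp n (pd n i (par n f)) (pd n (cidx n i) g) :=
  LinearMap.sum_apply _ _ _

lemma pd_DHmap (j : Fin n) (f g : Lambda n) :
    pd n j (DHmap n f g) = DHmap n (pd n j f) g + DHmap n (par n f) (pd n j g) := by
  simp only [DHmap_apply, map_sum, ← Finset.sum_add_distrib]
  refine Finset.sum_congr rfl fun i _ => ?_
  have hleft : pd n j (pd n i (par n f)) = pd n i (par n (pd n j f)) := by
    rw [pd_pd, pd_par j, map_neg, neg_neg]
  have hright : par n (pd n i (par n f)) = -pd n i (par n (par n f)) := by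
    rw [pd_par i (par n f), neg_neg]
  rw [pd_mulOp, hleft, hright, map_neg, LinearMap.neg_apply, pd_pd j, map_neg, neg_neg]

lemma DHmap_apply_mono_single (f : Lambda n) (k : Fin n) :
    DHmap n f (mono n {k}) = pd n (cidx n k) (par n f) := by
  rw [DHmap_apply, Finset.sum_eq_single (cidx n k)]
  · rw [cidx_cidx, pd_mono_single, if_pos rfl, mulOp_mono_empty_right]
  · intro i _ hi
    have hik : cidx n i ≠ k := fun h => hi (h ▸ (cidx_cidx i).symm)
    rw [pd_mono_single, if_neg hik, map_zero]
  · exact fun h => absurd (Finset.mem_univ _) h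

lemma DHmap_mono_single (c : Fin n) : DHmap n (mono n {c}) = -pd n (cidx n c) := by
  refine LinearMap.ext fun g => ?_
  rw [DHmap_apply, Finset.sum_eq_single c]
  · rw [pd_par, pd_mono_single, if_pos rfl, par_mono, Finset.card_empty, msign_zero, one_smul,
      map_neg, LinearMap.neg_apply, mono_empty_mulOp, LinearMap.neg_apply]
  · intro i _ hi
    rw [pd_par, pd_mono_single, if_neg hi, map_zero, neg_zero, map_zero, LinearMap.zero_apply]
  · exact fun h => absurd (Finset.mem_univ _) h

lemma pd_eq_neg_DHmap (k : Fin n) : pd n k = -DHmap n (mono n {cidx n k}) := by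
  rw [DHmap_mono_single, cidx_cidx, neg_neg]

lemma pd_mono_empty (i : Fin n) : pd n i (mono n ∅) = 0 := pd_mono_of_notMem (Finset.notMem_empty i)

lemma DHmap_mono_empty : DHmap n (mono n ∅) = 0 := by
  refine LinearMap.ext fun g => ?_
  rw [DHmap_apply]
  refine Finset.sum_eq_zero fun i _ => ?_
  rw [pd_par, pd_mono_empty, map_zero, neg_zero, map_zero, LinearMap.zero_apply]

lemma DHmap_apply_mono_empty (f : Lambda n) : DHmap n f (mono n ∅) = 0 := by
  rw [DHmap_apply]
  exact Finset.sum_eq_zero fun i _ => by rw [pd_mono_empty, map_zero]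

lemma DHmap_apply_empty {f : Lambda n} (hf : ∀ i, f {i} = 0) (g : Lambda n) :
    DHmap n f g ∅ = 0 := by
  rw [DHmap_apply, Finset.sum_apply]
  refine Finset.sum_eq_zero fun i _ => ?_
  rw [mulOp_apply_empty, pd_apply_of_notMem (Finset.notMem_empty i), insert_empty_eq, par_apply,
    hf i, mul_zero, mul_zero, zero_mul]

lemma sum_pd_pd_cidx (g : Lambda n) : ∑ i, pd n i (pd n (cidx n i) g) = 0 := by
  have hswap : ∑ i, pd n i (pd n (cidx n i) g) = ∑ i, pd n (cidx n i) (pd n i g) :=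
    Finset.sum_nbij' (cidx n) (cidx n) (by simp) (by simp) (by simp [cidx_cidx])
      (by simp [cidx_cidx]) (by simp [cidx_cidx])
  refine self_eq_neg.1 ?_
  calc ∑ i, pd n i (pd n (cidx n i) g)
      = -∑ i, pd n (cidx n i) (pd n i g) := by
        rw [← Finset.sum_neg_distrib]
        exact Finset.sum_congr rfl fun i _ => pd_pd _ _ _
    _ = -∑ i, pd n i (pd n (cidx n i) g) := by rw [hswap]

-- `D_H(f)(g)` is a divergence, and no derivative `∂ᵢ u` has a top coefficient.
lemma DHmap_apply_univ (f g : Lambda n) : DHmap n f g Finset.univ = 0 := by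
  have hdiv : DHmap n f g = ∑ i, pd n i (mulOp n (par n f) (pd n (cidx n i) g)) := by
    simp only [pd_mulOp, par_par, Finset.sum_add_distrib, ← map_sum, sum_pd_pd_cidx, map_zero,
      add_zero, DHmap_apply]
  rw [hdiv, Finset.sum_apply]
  exact Finset.sum_eq_zero fun i _ => pd_apply_of_mem (Finset.mem_univ i) _

lemma DHmap_mem_Hn {f : Lambda n} (hf : f Finset.univ = 0) : DHmap n f ∈ Hn n := ⟨f, hf, rfl⟩

lemma pd_mem_Hn (hn : 1 < n) (k : Fin n) : pd n k ∈ Hn n := by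
  have hk : Finset.univ ≠ {cidx n k} := fun h => by
    have := congrArg Finset.card h
    rw [Finset.card_univ, Fintype.card_fin, Finset.card_singleton] at this
    omega
  rw [pd_eq_neg_DHmap]
  exact (Hn n).neg_mem (DHmap_mem_Hn (mono_of_ne hk))

lemma Hn_apply_mono_empty {F : E n} (hF : F ∈ Hn n) : F (mono n ∅) = 0 := by
  obtain ⟨f, _, rfl⟩ := hF
  exact DHmap_apply_mono_empty f

lemma eq_zero_of_Hn_apply_mono_single {F : E n} (hF : F ∈ Hn n) (h : ∀ k, F (mono n {k}) = 0) :
    F = 0 := by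
  obtain ⟨f, _, rfl⟩ := hF
  refine LinearMap.ext fun g => ?_
  rw [DHmap_apply, LinearMap.zero_apply]
  refine Finset.sum_eq_zero fun i _ => ?_
  have hi := h (cidx n i)
  rw [DHmap_apply_mono_single, cidx_cidx] at hi
  rw [hi, map_zero, LinearMap.zero_apply]

end HamiltonianFields

section Gradings

variable {n : ℕ}

lemma mono_mem_ldeg (S : Finset (Fin n)) : mono n S ∈ ldeg n S.card := fun _ hT =>
  mono_of_ne fun h => hT (h ▸ rfl)

lemma mono_mem_lpar (S : Finset (Fin n)) : mono n S ∈ lpar n S.card := fun _ hT =>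
  mono_of_ne fun h => hT (h ▸ rfl)

lemma par_mem_ldeg {m : ℤ} {f : Lambda n} (hf : f ∈ ldeg n m) : par n f ∈ ldeg n m := fun S hS => by
  rw [par_apply, hf S hS, mul_zero]

lemma pd_mem_ldeg (i : Fin n) {m : ℤ} {f : Lambda n} (hf : f ∈ ldeg n m) :
    pd n i f ∈ ldeg n (m - 1) := by
  intro S hS
  by_cases hi : i ∈ S
  · exact pd_apply_of_mem hi f
  · have hcard : ((insert i S).card : ℤ) ≠ m := by
      rw [Finset.card_insert_of_notMem hi]
      omega
    rw [pd_apply_of_notMem hi, hf _ hcard, mul_zero]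

lemma mulOp_mem_ldeg {a b : ℤ} {f g : Lambda n} (hf : f ∈ ldeg n a) (hg : g ∈ ldeg n b) :
    mulOp n f g ∈ ldeg n (a + b) := by
  intro U hU
  rw [mulOp_apply]
  refine Finset.sum_eq_zero fun S hS => ?_
  obtain ha | ha := eq_or_ne (S.card : ℤ) a
  · have hcard := Finset.card_sdiff_add_card_eq_card (Finset.mem_powerset.1 hS)
    rw [hg (U \ S) (by omega), mul_zero]
  · rw [hf S ha, mul_zero, zero_mul]

lemma pd_mem_edeg (k : Fin n) : pd n k ∈ edeg n (-1) := fun _ _ hf => pd_mem_ldeg k hf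

lemma DHmap_mem_edeg {m : ℤ} {f : Lambda n} (hf : f ∈ ldeg n m) : DHmap n f ∈ edeg n (m - 2) := by
  intro k g hg
  rw [DHmap_apply]
  refine Submodule.sum_mem _ fun i _ => ?_
  convert mulOp_mem_ldeg (pd_mem_ldeg i (par_mem_ldeg hf)) (pd_mem_ldeg (cidx n i) hg) using 2
  ring

lemma mem_epar_of_mem_edeg {d : ℤ} {D : E n} (hD : D ∈ edeg n d) : D ∈ epar n d := by
  intro q f hf T hT
  rw [eq_sum_mono f, map_sum, Finset.sum_apply]
  refine Finset.sum_eq_zero fun S _ => ?_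
  rw [map_smul, Pi.smul_apply]
  by_cases hS : (S.card : ZMod 2) = q
  · have hTd : (T.card : ℤ) ≠ S.card + d := fun h => hT <| by
      have := congrArg (Int.cast : ℤ → ZMod 2) h
      push_cast at this
      rw [this, hS]
    rw [hD _ _ (mono_mem_ldeg S) T hTd, smul_zero]
  · rw [hf S hS, zero_smul]

lemma pd_mem_epar (k : Fin n) : pd n k ∈ epar n 1 := by
  simpa using mem_epar_of_mem_edeg (pd_mem_edeg k)

lemma DHmap_mono_mem_epar (S : Finset (Fin n)) : DHmap n (mono n S) ∈ epar n S.card := by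
  have h2 : (2 : ZMod 2) = 0 := rfl
  simpa [h2] using mem_epar_of_mem_edeg (DHmap_mem_edeg (mono_mem_ldeg S))

lemma par_of_mem_lpar {q : ZMod 2} {f : Lambda n} (hf : f ∈ lpar n q) : par n f = sgn q • f := by
  funext S
  rw [par_apply, Pi.smul_apply, smul_eq_mul]
  by_cases hS : (S.card : ZMod 2) = q
  · rw [← hS, sgn_natCast]
  · rw [hf S hS, mul_zero, mul_zero]

lemma par_mul_mul_par {α : ZMod 2} {D : E n} (hD : D ∈ epar n α) :
    par n * D * par n = sgn α • D := by
  refine linearMap_ext_mono fun S => ?_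
  calc par n (D (par n (mono n S)))
      = msign S.card • par n (D (mono n S)) := by rw [par_mono, map_smul, map_smul]
    _ = (msign S.card * msign S.card * sgn α) • D (mono n S) := by
        rw [par_of_mem_lpar (hD _ _ (mono_mem_lpar S)), sgn_add, sgn_natCast, smul_smul, mul_assoc]
    _ = sgn α • D (mono n S) := by rw [msign_mul_self, one_mul]

lemma mul_mem_epar {α β : ZMod 2} {D F : E n} (hD : D ∈ epar n α) (hF : F ∈ epar n β) :
    D * F ∈ epar n (α + β) := by
  intro q f hf
  rw [add_comm α, ← add_assoc]
  exact hD _ _ (hF q f hf)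

lemma mul_mem_edeg {a b : ℤ} {D F : E n} (hD : D ∈ edeg n a) (hF : F ∈ edeg n b) :
    D * F ∈ edeg n (a + b) := by
  intro m f hf
  rw [add_comm a, ← add_assoc]
  exact hD _ _ (hF m f hf)

end Gradings

section Supercommutator

variable {n : ℕ} {α β γ : ZMod 2} {D F G : E n}

lemma sbL_of_mem_epar (hD : D ∈ epar n α) (hF : F ∈ epar n β) :
    sbL n D F = D * F - sgn (α * β) • (F * D) := by
  have hdef : sbL n D F = D * F - (2 : ℂ)⁻¹ •
      ((F + par n * F * par n) * D + (F - par n * F * par n) * (par n * D * par n)) := rfl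
  have hsign : (2 : ℂ)⁻¹ * (1 + sgn β + (1 - sgn β) * sgn α) = sgn (α * β) := by
    obtain rfl | rfl := eq_zero_or_eq_one_of_zmod_two α <;>
      obtain rfl | rfl := eq_zero_or_eq_one_of_zmod_two β <;>
      norm_num [sgn_zero, sgn_one]
  rw [hdef, par_mul_mul_par hD, par_mul_mul_par hF, ← hsign]
  simp only [add_mul, sub_mul, smul_mul_assoc, mul_smul_comm]
  module

lemma sbL_mem_epar (hD : D ∈ epar n α) (hF : F ∈ epar n β) : sbL n D F ∈ epar n (α + β) := by
  rw [sbL_of_mem_epar hD hF]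
  exact Submodule.sub_mem _ (mul_mem_epar hD hF)
    (Submodule.smul_mem _ _ (add_comm α β ▸ mul_mem_epar hF hD))

lemma sbL_mem_edeg {a b : ℤ} (hD : D ∈ edeg n a) (hF : F ∈ edeg n b) :
    sbL n D F ∈ edeg n (a + b) := by
  rw [sbL_of_mem_epar (mem_epar_of_mem_edeg hD) (mem_epar_of_mem_edeg hF)]
  exact Submodule.sub_mem _ (mul_mem_edeg hD hF)
    (Submodule.smul_mem _ _ (add_comm a b ▸ mul_mem_edeg hF hD))

lemma sbL_skew (hD : D ∈ epar n α) (hF : F ∈ epar n β) :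
    sbL n D F = -sgn (α * β) • sbL n F D := by
  rw [sbL_of_mem_epar hD hF, sbL_of_mem_epar hF hD, mul_comm β α]
  linear_combination (norm := module) (-sgn_mul_self (α * β)) • (D * F)

lemma sbL_eq_zero_comm (hD : D ∈ epar n α) (hF : F ∈ epar n β) :
    sbL n D F = 0 ↔ sbL n F D = 0 := by
  rw [sbL_skew hD hF, smul_eq_zero_iff_right (neg_ne_zero.2 (sgn_ne_zero _))]

lemma sbL_sbL (hD : D ∈ epar n α) (hF : F ∈ epar n β) (hG : G ∈ epar n γ) :
    sbL n D (sbL n F G) = sbL n (sbL n D F) G + sgn (α * β) • sbL n F (sbL n D G) := by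
  rw [sbL_of_mem_epar hD (sbL_mem_epar hF hG), sbL_of_mem_epar (sbL_mem_epar hD hF) hG,
    sbL_of_mem_epar hF (sbL_mem_epar hD hG), sbL_of_mem_epar hF hG, sbL_of_mem_epar hD hF,
    sbL_of_mem_epar hD hG]
  simp only [mul_add, add_mul, sgn_add, mul_sub, sub_mul, mul_smul_comm, smul_mul_assoc, smul_sub,
    smul_smul, mul_assoc, mul_comm β α]
  linear_combination (norm := module)
    sgn_mul_self (α * β) • (sgn (β * γ) • (D * (G * F) - sgn (α * γ) • (G * (D * F))))

lemma eq_zero_of_sbL_pd_eq_zero (hF : F ∈ epar n α) (h0 : ∀ u, F u ∅ = 0)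
    (h : ∀ k, sbL n (pd n k) F = 0) : F = 0 := by
  have hcomm : ∀ k u, pd n k (F u) = sgn (1 * α) • F (pd n k u) := fun k u =>
    congrArg (· u) (sub_eq_zero.1 ((sbL_of_mem_epar (pd_mem_epar k) hF).symm.trans (h k)))
  refine linearMap_ext_mono fun S => ?_
  induction S using Finset.strongInduction with
  | H S ih =>
    refine eq_zero_of_pd_eq_zero (h0 _) fun k => ?_
    rw [hcomm]
    by_cases hk : k ∈ S
    · rw [pd_mono_of_mem hk, map_smul, ih _ (Finset.erase_ssubset hk), LinearMap.zero_apply,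
        smul_zero, smul_zero]
    · rw [pd_mono_of_notMem hk, map_zero, smul_zero]

lemma sbL_pd_DHmap (k : Fin n) (f : Lambda n) :
    sbL n (pd n k) (DHmap n f) = DHmap n (pd n k f) := by
  refine LinearMap.congr_fun (f := sbL n (pd n k) ∘ₗ DHmap n) (g := DHmap n ∘ₗ pd n k)
    (linearMap_ext_mono fun S => ?_) f
  refine LinearMap.ext fun g => ?_
  simp only [LinearMap.comp_apply]
  rw [sbL_of_mem_epar (pd_mem_epar k) (DHmap_mono_mem_epar S), one_mul, sgn_natCast]
  simp only [LinearMap.sub_apply, LinearMap.smul_apply, Module.End.mul_apply, pd_DHmap, par_mono,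
    map_smul, add_sub_cancel_right]

end Supercommutator

section Closure

variable {n : ℕ}

lemma sbL_DHmap_mono_single_left (c : Fin n) (g : Lambda n) :
    sbL n (DHmap n (mono n {c})) (DHmap n g) = DHmap n (DHmap n (mono n {c}) g) := by
  rw [DHmap_mono_single, map_neg, LinearMap.neg_apply, sbL_pd_DHmap, LinearMap.neg_apply, map_neg]

lemma sbL_DHmap_mono_single_right (S : Finset (Fin n)) (c : Fin n) :
    sbL n (DHmap n (mono n S)) (DHmap n (mono n {c}))
      = DHmap n (DHmap n (mono n S) (mono n {c})) := by
  rw [DHmap_apply_mono_single, DHmap_mono_single, map_neg,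
    sbL_skew (DHmap_mono_mem_epar S) (pd_mem_epar _), sbL_pd_DHmap, mul_one, sgn_natCast, par_mono,
    map_smul, map_smul]
  module

lemma sbL_DHmap_mono_mono_of_pd {S T : Finset (Fin n)} (hS : 1 < S.card) (hT : 1 < T.card)
    (hpdS : ∀ k, sbL n (DHmap n (pd n k (mono n S))) (DHmap n (mono n T))
      = DHmap n (DHmap n (pd n k (mono n S)) (mono n T)))
    (hpdT : ∀ k, sbL n (DHmap n (mono n S)) (DHmap n (pd n k (mono n T)))
      = DHmap n (DHmap n (mono n S) (pd n k (mono n T)))) :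
    sbL n (DHmap n (mono n S)) (DHmap n (mono n T)) = DHmap n (DHmap n (mono n S) (mono n T)) := by
  have hS' := DHmap_mem_edeg (mono_mem_ldeg S)
  have hT' := DHmap_mem_edeg (mono_mem_ldeg T)
  have hST := hS' _ _ (mono_mem_ldeg T)
  have hpar : sbL n (DHmap n (mono n S)) (DHmap n (mono n T))
      - DHmap n (DHmap n (mono n S) (mono n T))
        ∈ edeg n ((S.card : ℤ) - 2 + ((T.card : ℤ) - 2)) := by
    refine Submodule.sub_mem _ (sbL_mem_edeg hS' hT') ?_
    convert DHmap_mem_edeg hST using 2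
    ring
  refine sub_eq_zero.1 (eq_zero_of_sbL_pd_eq_zero (mem_epar_of_mem_edeg hpar) (fun u => ?_)
    fun k => ?_)
  · have hconst {R : Finset (Fin n)} (hR : 1 < R.card) (v : Lambda n) :
        DHmap n (mono n R) v ∅ = 0 := by
      refine DHmap_apply_empty (fun i => mono_of_ne ?_) v
      rintro rfl
      exact absurd hR (by simp)
    have hconst' : DHmap n (DHmap n (mono n S) (mono n T)) u ∅ = 0 :=
      DHmap_apply_empty (fun i => hST {i} (by rw [Finset.card_singleton]; omega)) u
    rw [sbL_of_mem_epar (DHmap_mono_mem_epar S) (DHmap_mono_mem_epar T)]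
    simp only [LinearMap.sub_apply, LinearMap.smul_apply, Module.End.mul_apply, Pi.sub_apply,
      Pi.smul_apply, hconst hS, hconst hT, hconst', smul_zero, sub_zero]
  · rw [map_sub, sbL_sbL (pd_mem_epar k) (DHmap_mono_mem_epar S) (DHmap_mono_mem_epar T),
      sbL_pd_DHmap, sbL_pd_DHmap, sbL_pd_DHmap, hpdS, hpdT, pd_DHmap, par_mono, one_mul,
      sgn_natCast, map_add, map_smul, LinearMap.smul_apply, map_smul, sub_self]

-- Both sides are determined by their supercommutators with the `∂ₖ`, which reduces the claim
-- to monomials of smaller degree.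
lemma sbL_DHmap_mono_mono (S T : Finset (Fin n)) :
    sbL n (DHmap n (mono n S)) (DHmap n (mono n T)) = DHmap n (DHmap n (mono n S) (mono n T)) := by
  induction hN : S.card + T.card using Nat.strong_induction_on generalizing S T with
  | _ N ih =>
    obtain hS | hS | hS := lt_trichotomy S.card 1
    · rw [Finset.card_eq_zero.1 (Nat.lt_one_iff.1 hS), DHmap_mono_empty, map_zero,
        LinearMap.zero_apply, LinearMap.zero_apply, map_zero]
    · obtain ⟨c, rfl⟩ := Finset.card_eq_one.1 hS
      exact sbL_DHmap_mono_single_left c _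
    obtain hT | hT | hT := lt_trichotomy T.card 1
    · rw [Finset.card_eq_zero.1 (Nat.lt_one_iff.1 hT), DHmap_apply_mono_empty, DHmap_mono_empty,
        map_zero, map_zero]
    · obtain ⟨c, rfl⟩ := Finset.card_eq_one.1 hT
      exact sbL_DHmap_mono_single_right S c
    refine sbL_DHmap_mono_mono_of_pd hS hT (fun k => ?_) fun k => ?_
    · by_cases hk : k ∈ S
      · have hcard := Finset.card_erase_lt_of_mem hk
        simp only [pd_mono_of_mem hk, map_smul, LinearMap.smul_apply]
        rw [ih _ (by omega) _ _ rfl]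
      · simp only [pd_mono_of_notMem hk, map_zero, LinearMap.zero_apply]
    · by_cases hk : k ∈ T
      · have hcard := Finset.card_erase_lt_of_mem hk
        simp only [pd_mono_of_mem hk, map_smul]
        rw [ih _ (by omega) _ _ rfl]
      · simp only [pd_mono_of_notMem hk, map_zero]

lemma sbL_DHmap_DHmap (f g : Lambda n) :
    sbL n (DHmap n f) (DHmap n g) = DHmap n (DHmap n f g) := by
  have hleft (T : Finset (Fin n)) : (sbL n).flip (DHmap n (mono n T)) ∘ₗ DHmap n
      = DHmap n ∘ₗ (DHmap n).flip (mono n T) :=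
    linearMap_ext_mono fun S => sbL_DHmap_mono_mono S T
  exact LinearMap.congr_fun (f := sbL n (DHmap n f) ∘ₗ DHmap n) (g := DHmap n ∘ₗ DHmap n f)
    (linearMap_ext_mono fun T => LinearMap.congr_fun (hleft T) f) g

lemma sbL_mem_Hn {D F : E n} (hD : D ∈ Hn n) (hF : F ∈ Hn n) : sbL n D F ∈ Hn n := by
  obtain ⟨f, _, rfl⟩ := hD
  obtain ⟨g, _, rfl⟩ := hF
  rw [sbL_DHmap_DHmap]
  exact DHmap_mem_Hn (DHmap_apply_univ f g)

end Closure

section GradedPieces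

variable {n : ℕ} {j k : ℤ} {x y F : E n}

/-- The Hamiltonian field `D_H(x_S)` of a basis monomial. For nonempty `S ≠ {1,…,n}` these form a
basis of `H(n)`, and `D_H(x_S)` has degree `|S| - 2`. -/
def DHmono (S : Finset (Fin n)) : E n := DHmap n (mono n S)

lemma mem_algebra_inf_epar (hx : x ∈ CT.H.grade n j) : x ∈ CT.H.algebra n ⊓ epar n j :=
  ⟨hx.1, mem_epar_of_mem_edeg hx.2⟩

lemma sbL_mem_grade (hx : x ∈ CT.H.grade n j) (hy : y ∈ CT.H.grade n k) :
    sbL n x y ∈ CT.H.grade n (j + k) :=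
  ⟨sbL_mem_Hn hx.1 hy.1, sbL_mem_edeg hx.2 hy.2⟩

lemma sbL_eq_zero_comm_of_mem_grade (hx : x ∈ CT.H.grade n j) (hy : y ∈ CT.H.grade n k) :
    sbL n x y = 0 ↔ sbL n y x = 0 :=
  sbL_eq_zero_comm (mem_epar_of_mem_edeg hx.2) (mem_epar_of_mem_edeg hy.2)

lemma pd_mem_grade (hn : 1 < n) (l : Fin n) : pd n l ∈ CT.H.grade n (-1) :=
  ⟨pd_mem_Hn hn l, pd_mem_edeg l⟩

lemma DHmono_mem_grade {S : Finset (Fin n)} (hS : S ≠ Finset.univ) :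
    DHmono S ∈ CT.H.grade n (S.card - 2) :=
  ⟨DHmap_mem_Hn (mono_of_ne hS.symm), DHmap_mem_edeg (mono_mem_ldeg S)⟩

lemma DHmono_mem_grade_of_card_lt {S : Finset (Fin n)} (hS : S.card < n) :
    DHmono S ∈ CT.H.grade n (S.card - 2) :=
  DHmono_mem_grade fun h => hS.ne (h ▸ Finset.card_fin n)

lemma exists_smul_sbL_pd_DHmono {S : Finset (Fin n)} {l : Fin n} (hl : l ∉ S) :
    ∃ c : ℂ, DHmono S = c • sbL n (pd n l) (DHmono (insert l S)) := by
  refine ⟨msign (S.filter (· < l)).card, ?_⟩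
  rw [DHmono, DHmono, sbL_pd_DHmap, pd_mono_insert hl, map_smul, smul_smul, msign_mul_self,
    one_smul]

lemma exists_smul_sbL_DHmono_pd {S : Finset (Fin n)} {l : Fin n} (hl : l ∉ S) :
    ∃ c : ℂ, DHmono S = c • sbL n (DHmono (insert l S)) (pd n l) := by
  obtain ⟨c, hc⟩ := exists_smul_sbL_pd_DHmono hl
  exact ⟨_, hc.trans (by rw [DHmono, sbL_skew (pd_mem_epar l) (DHmap_mono_mem_epar _), smul_smul])⟩

lemma coeff_eq_zero_of_DHmap_mem_edeg {f : Lambda n} (hf : DHmap n f ∈ edeg n j)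
    {S : Finset (Fin n)} (hS : S.Nonempty) (hcard : (S.card : ℤ) ≠ j + 2) : f S = 0 := by
  obtain ⟨i, hi⟩ := hS
  have hcard' := Finset.card_erase_add_one hi
  have hcoeff := hf _ _ (mono_mem_ldeg {cidx n i}) (S.erase i)
    (by rw [Finset.card_singleton]; omega)
  rw [DHmap_apply_mono_single, cidx_cidx, pd_apply_of_notMem (Finset.notMem_erase i S),
    Finset.insert_erase hi, par_apply] at hcoeff
  simpa [msign_ne_zero] using hcoeff

variable {M : Type*} [AddCommGroup M] [Module ℂ M]

lemma map_DHmap (A : E n →ₗ[ℂ] M) (f : Lambda n) : A (DHmap n f) = ∑ S, f S • A (DHmono S) := by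
  conv_lhs => rw [eq_sum_mono f, map_sum, map_sum]
  simp only [map_smul, DHmono]

lemma map_eq_zero_of_mem_grade (A : E n →ₗ[ℂ] M)
    (hA : ∀ S : Finset (Fin n), S ≠ Finset.univ → (S.card : ℤ) = j + 2 → A (DHmono S) = 0)
    (hx : x ∈ CT.H.grade n j) : A x = 0 := by
  obtain ⟨⟨f, hf, rfl⟩, hj⟩ := hx
  rw [map_DHmap]
  refine Finset.sum_eq_zero fun S _ => ?_
  obtain rfl | hS := S.eq_empty_or_nonempty
  · rw [DHmono, DHmap_mono_empty, map_zero, smul_zero]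
  by_cases hcard : (S.card : ℤ) = j + 2
  · obtain rfl | hS' := eq_or_ne S Finset.univ
    · exact smul_eq_zero_of_left hf _
    · rw [hA S hS' hcard, smul_zero]
  · rw [coeff_eq_zero_of_DHmap_mem_edeg hj hS hcard, zero_smul]

lemma map_eq_zero_of_mem_Hn (A : E n →ₗ[ℂ] M) (hA : ∀ j, ∀ x ∈ CT.H.grade n j, A x = 0)
    (hx : x ∈ Hn n) : A x = 0 := by
  obtain ⟨f, hf, rfl⟩ := hx
  rw [map_DHmap]
  refine Finset.sum_eq_zero fun S _ => ?_
  obtain rfl | hS := eq_or_ne S Finset.univ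
  · exact smul_eq_zero_of_left hf _
  · rw [hA _ _ (DHmono_mem_grade hS), smul_zero]

lemma map_eq_zero_of_mem_grade_neg_one (A : E n →ₗ[ℂ] M) (hA : ∀ l, A (pd n l) = 0)
    (hx : x ∈ CT.H.grade n (-1)) : A x = 0 := by
  refine map_eq_zero_of_mem_grade A (fun S _ hS => ?_) hx
  obtain ⟨c, rfl⟩ := Finset.card_eq_one.1 (show S.card = 1 by omega)
  rw [DHmono, DHmap_mono_single, map_neg, hA, neg_zero]

lemma eq_zero_of_mem_grade_of_lt (hj : j < -1) (hx : x ∈ CT.H.grade n j) : x = 0 := by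
  refine map_eq_zero_of_mem_grade LinearMap.id (fun S _ hS => ?_) hx
  have hS' : S = ∅ := Finset.card_eq_zero.1 (by omega)
  rw [hS', LinearMap.id_apply, DHmono, DHmap_mono_empty]

lemma eq_zero_of_mem_grade_of_sbL_pd_eq_zero (hj : 0 ≤ j) (hF : F ∈ CT.H.grade n j)
    (h : ∀ l, sbL n (pd n l) F = 0) : F = 0 := by
  refine eq_zero_of_sbL_pd_eq_zero (mem_epar_of_mem_edeg hF.2) (fun u => ?_) h
  rw [eq_sum_mono u, map_sum, Finset.sum_apply]
  refine Finset.sum_eq_zero fun S _ => ?_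
  rw [map_smul, Pi.smul_apply]
  obtain rfl | hS := S.eq_empty_or_nonempty
  · rw [Hn_apply_mono_empty hF.1, Pi.zero_apply, smul_zero]
  · have hcard : ((∅ : Finset (Fin n)).card : ℤ) ≠ S.card + j := by
      have := hS.card_pos
      rw [Finset.card_empty]
      omega
    rw [hF.2 _ _ (mono_mem_ldeg S) ∅ hcard, smul_zero]

-- A field of degree `-1` maps generators to constants, which every element of `H(n)` kills.
lemma apply_apply_mono_single_eq_zero {Y : E n} (hF : F ∈ CT.H.grade n (-1))
    (hY : Y ∈ CT.H.grade n k) (h : sbL n F Y = 0) (l : Fin n) : F (Y (mono n {l})) = 0 := by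
  have hconst : F (mono n {l}) = F (mono n {l}) ∅ • mono n ∅ := by
    funext T
    rw [Pi.smul_apply]
    obtain rfl | hT := T.eq_empty_or_nonempty
    · rw [mono_self, smul_eq_mul, mul_one]
    · have hcard : (T.card : ℤ) ≠ ({l} : Finset (Fin n)).card + -1 := by
        have := hT.card_pos
        rw [Finset.card_singleton]
        omega
      rw [hF.2 _ _ (mono_mem_ldeg {l}) T hcard, mono_of_ne hT.ne_empty, smul_zero]
  rw [sbL_of_mem_epar (mem_epar_of_mem_edeg hF.2) (mem_epar_of_mem_edeg hY.2), sub_eq_zero] at h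
  have happly := LinearMap.congr_fun h (mono n {l})
  rwa [LinearMap.smul_apply, Module.End.mul_apply, Module.End.mul_apply, hconst, map_smul,
    Hn_apply_mono_empty hY.1, smul_zero, smul_zero] at happly

lemma exists_DHmono_pair_apply {q r : Fin n} (hqr : q ≠ r) :
    ∃ c : ℂ, c ≠ 0 ∧ DHmono {q, r} (mono n {cidx n r}) = c • mono n {q} := by
  refine ⟨msign (({q} : Finset (Fin n)).filter (· < r)).card, msign_ne_zero _, ?_⟩
  rw [DHmono, DHmap_apply_mono_single, cidx_cidx, par_mono, Finset.card_pair hqr, Finset.pair_comm,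
    map_smul, pd_mono_insert (by simpa using hqr.symm), msign, neg_one_sq, one_smul]

lemma DHmono_apply_eq_zero {S : Finset (Fin n)} {d : Fin n} (hd : d ∉ S) :
    DHmono S (mono n {cidx n d}) = 0 := by
  rw [DHmono, DHmap_apply_mono_single, cidx_cidx, par_mono, map_smul, pd_mono_of_notMem hd,
    smul_zero]

lemma DHmono_pair_mem_grade_zero (hn : 2 < n) {q r : Fin n} (hqr : q ≠ r) :
    DHmono {q, r} ∈ CT.H.grade n 0 := by
  have hcard := Finset.card_pair hqr
  simpa [hcard] using DHmono_mem_grade_of_card_lt (hcard.trans_lt hn)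

lemma apply_mono_single_eq_zero_of_sbL_pair (hn : 2 < n) (hF : F ∈ CT.H.grade n (-1))
    {q r : Fin n} (hqr : q ≠ r) (h : sbL n F (DHmono {q, r}) = 0) : F (mono n {q}) = 0 := by
  obtain ⟨c, hc, happly⟩ := exists_DHmono_pair_apply hqr
  have := apply_apply_mono_single_eq_zero hF (DHmono_pair_mem_grade_zero hn hqr) h (cidx n r)
  rw [happly, map_smul] at this
  exact (smul_eq_zero.1 this).resolve_left hc

lemma apply_mono_single_eq_zero_of_sbL_sbL_pair (hn : 2 < n) (hF : F ∈ CT.H.grade n (-1))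
    {a b d : Fin n} (hba : b ≠ a) (hda : d ≠ a) (hdb : d ≠ b) (hda' : cidx n a ≠ d)
    (h : sbL n F (sbL n (DHmono {b, a}) (DHmono {cidx n a, d})) = 0) : F (mono n {b}) = 0 := by
  have hU := DHmono_pair_mem_grade_zero hn hba
  have hV := DHmono_pair_mem_grade_zero hn hda'
  obtain ⟨c, hc, hUapply⟩ := exists_DHmono_pair_apply hba
  obtain ⟨e, he, hVapply⟩ := exists_DHmono_pair_apply hda'
  have happly : sbL n (DHmono {b, a}) (DHmono {cidx n a, d}) (mono n {cidx n d})
      = (e * c) • mono n {b} := by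
    rw [sbL_of_mem_epar (mem_epar_of_mem_edeg hU.2) (mem_epar_of_mem_edeg hV.2),
      LinearMap.sub_apply, LinearMap.smul_apply, Module.End.mul_apply, Module.End.mul_apply,
      hVapply, map_smul, hUapply, DHmono_apply_eq_zero (by simp [hda, hdb]), map_zero, smul_zero,
      sub_zero, smul_smul]
  have := apply_apply_mono_single_eq_zero hF (sbL_mem_grade hU hV) h (cidx n d)
  rw [happly, map_smul] at this
  exact (smul_eq_zero.1 this).resolve_left (mul_ne_zero he hc)

lemma eq_zero_of_sbL_DHmono_single_eq_zero (hn : 1 < n) (hj : j ≠ -1) (hF : F ∈ CT.H.grade n j)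
    (h : ∀ q, sbL n F (DHmono {q}) = 0) : F = 0 := by
  obtain hj | hj := lt_or_gt_of_ne hj
  · exact eq_zero_of_mem_grade_of_lt hj hF
  · refine eq_zero_of_mem_grade_of_sbL_pd_eq_zero (by omega) hF fun l => ?_
    rw [sbL_eq_zero_comm_of_mem_grade (pd_mem_grade hn l) hF, pd_eq_neg_DHmap, map_neg,
      neg_eq_zero]
    exact h _

lemma eq_zero_of_sbL_DHmono_pair_eq_zero (hn : 2 < n) (hF : F ∈ CT.H.grade n (-1))
    (h : ∀ q, ∃ r ≠ q, sbL n F (DHmono {q, r}) = 0) : F = 0 := by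
  refine eq_zero_of_Hn_apply_mono_single hF.1 fun q => ?_
  obtain ⟨r, hr, hqr⟩ := h q
  exact apply_mono_single_eq_zero_of_sbL_pair hn hF hr.symm hqr

lemma eq_zero_of_sbL_DHmono_eq_zero (hn : 2 < n) (hF : F ∈ CT.H.grade n j)
    (hsingle : ∀ q, sbL n F (DHmono {q}) = 0)
    (hpair : ∀ q, ∃ r ≠ q, sbL n F (DHmono {q, r}) = 0) : F = 0 := by
  obtain rfl | hj := eq_or_ne j (-1)
  · exact eq_zero_of_sbL_DHmono_pair_eq_zero hn hF hpair
  · exact eq_zero_of_sbL_DHmono_single_eq_zero (by omega) hj hF hsingle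

lemma sbL_eq_zero_of_add_lt (hjk : j + k < -1) (hx : x ∈ CT.H.grade n j)
    (hy : y ∈ CT.H.grade n k) : sbL n x y = 0 :=
  eq_zero_of_mem_grade_of_lt hjk (sbL_mem_grade hx hy)

lemma sbL_pd_DHmono_eq_zero {S : Finset (Fin n)} {l : Fin n} (hl : l ∉ S) :
    sbL n (pd n l) (DHmono S) = 0 := by
  rw [DHmono, sbL_pd_DHmap, pd_mono_of_notMem hl, map_zero]

end GradedPieces

section Superbiderivations

variable {n : ℕ} {L : Submodule ℂ (E n)} {p α β : ZMod 2} {f : E n →ₗ[ℂ] E n →ₗ[ℂ] E n}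

set_option maxHeartbeats 800000 in
-- Expand `f([x,u],[y,v])` in both orders.
lemma IsSuperBider.sbL_apply_sbL (hf : IsSuperBider n L p f)
    (hL : ∀ x ∈ L, ∀ y ∈ L, sbL n x y ∈ L) {υ ν : ZMod 2} {x y u v : E n}
    (hx : x ∈ L ⊓ epar n α) (hy : y ∈ L ⊓ epar n β) (hu : u ∈ L ⊓ epar n υ)
    (hv : v ∈ L ⊓ epar n ν) :
    sbL n (f x y) (sbL n u v) = sgn (p * (α + β)) • sbL n (sbL n x y) (f u v)
      + sgn (α * υ + α * β + υ * β) • sbL n (f u y) (sbL n x v)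
      - sgn (ν * (υ + β)) • sbL n (f x v) (sbL n y u) := by
  have hxu : sbL n x u ∈ L ⊓ epar n (α + υ) := ⟨hL _ hx.1 _ hu.1, sbL_mem_epar hx.2 hu.2⟩
  have hyv : sbL n y v ∈ L ⊓ epar n (β + ν) := ⟨hL _ hy.1 _ hv.1, sbL_mem_epar hy.2 hv.2⟩
  have hleft := hf.eq1 _ _ _ x hx u hu (sbL n y v) hyv
  have hright := hf.eq2 _ _ _ (sbL n x u) hxu y hy v hv
  simp only [hf.eq2 _ _ _ u hu y hy v hv, hf.eq2 _ _ _ x hx y hy v hv, map_add, map_smul,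
    LinearMap.add_apply, LinearMap.smul_apply] at hleft
  simp only [hf.eq1 _ _ _ x hx u hu y hy, hf.eq1 _ _ _ x hx u hu v hv, map_add, map_smul,
    LinearMap.add_apply, LinearMap.smul_apply] at hright
  have hfxy := (hf.maps _ _ x hx y hy).2
  have hfxv := (hf.maps _ _ x hx v hv).2
  have hfuy := (hf.maps _ _ u hu y hy).2
  have hfuv := (hf.maps _ _ u hu v hv).2
  have jacobi_fuy := sbL_sbL hx.2 hfuy hv.2
  have jacobi_fuv := sbL_sbL hx.2 hy.2 hfuv
  have jacobi_fxv := sbL_sbL hy.2 hfxv hu.2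
  have jacobi_fxy := sbL_sbL hfxy hu.2 hv.2
  have skew_fxy := sbL_skew hu.2 (sbL_mem_epar hfxy hv.2)
  have h2 : (1 + 1 : ZMod 2) = 0 := rfl
  linear_combination (norm := skip) (sgn (υ * β)) • (hleft - hright
    + sgn (α * p) • jacobi_fuy + sgn (α * p + (p + υ) * β) • jacobi_fuv
    - sgn ((p + (α + υ)) * β + υ * ν) • jacobi_fxv + sgn (υ * β) • jacobi_fxy
    + sgn (υ * β + (α + β + p) * υ) • skew_fxy)
  rcases eq_zero_or_eq_one_of_zmod_two α with rfl | rfl <;>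
  rcases eq_zero_or_eq_one_of_zmod_two β with rfl | rfl <;>
  rcases eq_zero_or_eq_one_of_zmod_two υ with rfl | rfl <;>
  rcases eq_zero_or_eq_one_of_zmod_two ν with rfl | rfl <;>
  rcases eq_zero_or_eq_one_of_zmod_two p with rfl | rfl <;>
  simp only [mul_zero, mul_one, add_zero, zero_add, h2, sgn_zero, sgn_one] <;>
  module

end Superbiderivations

section Superflip

variable {n : ℕ} {L : Submodule ℂ (E n)} {p α β : ZMod 2} {f : E n →ₗ[ℂ] E n →ₗ[ℂ] E n}

/-- The super-transpose `(x, y) ↦ (−1)^{|x||y|} f(y, x)` of a bilinear map. Conjugation by the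
parity operator is `x ↦ (−1)^{|x|} x`; the two summands come from the even and the odd part
of `x`. -/
def superflip (f : E n →ₗ[ℂ] E n →ₗ[ℂ] E n) : E n →ₗ[ℂ] E n →ₗ[ℂ] E n :=
  let conj : E n →ₗ[ℂ] E n := LinearMap.mulLeftRight ℂ (par n, par n)
  (2 : ℂ)⁻¹ • (f.flip.compl₁₂ (LinearMap.id + conj) LinearMap.id
    + f.flip.compl₁₂ (LinearMap.id - conj) conj)

lemma superflip_apply {x y : E n} (hx : x ∈ epar n α) (hy : y ∈ epar n β) :
    superflip f x y = sgn (α * β) • f y x := by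
  simp only [superflip, LinearMap.smul_apply, LinearMap.sub_apply, LinearMap.add_apply,
    LinearMap.compl₁₂_apply, LinearMap.flip_apply, LinearMap.id_apply,
    LinearMap.mulLeftRight_apply, par_mul_mul_par hx, par_mul_mul_par hy, map_add,
    map_sub, map_smul]
  rcases eq_zero_or_eq_one_of_zmod_two α with rfl | rfl <;>
  rcases eq_zero_or_eq_one_of_zmod_two β with rfl | rfl <;>
  simp only [mul_zero, mul_one, sgn_zero, sgn_one] <;>
  module

lemma IsSuperBider.superflip (hf : IsSuperBider n L p f) :
    IsSuperBider n L p (superflip f) where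
  maps α β x hx y hy := by
    rw [superflip_apply hx.2 hy.2, add_comm α]
    exact Submodule.smul_mem _ _ (hf.maps _ _ y hy x hx)
  eq1 α β γ x hx y hy z hz := by
    have hsgn : ∀ a b c d : ZMod 2, (a + b) * c + (d + c) * a = a * d + b * c := by decide
    rw [superflip_apply (sbL_mem_epar hx.2 hy.2) hz.2, superflip_apply hy.2 hz.2,
      superflip_apply hx.2 hz.2, hf.eq2 _ _ _ z hz x hx y hy]
    simp only [smul_add, smul_smul, map_smul, LinearMap.smul_apply, ← sgn_add, hsgn]
    rw [add_comm, add_mul, add_comm (β * γ)]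
  eq2 α β γ x hx y hy z hz := by
    have hsgn : ∀ a b c : ZMod 2, a * (b + c) + c * a = a * b := by decide
    rw [superflip_apply hx.2 (sbL_mem_epar hy.2 hz.2), superflip_apply hx.2 hy.2,
      superflip_apply hx.2 hz.2, hf.eq1 _ _ _ y hy z hz x hx]
    simp only [smul_add, smul_smul, map_smul, LinearMap.smul_apply, ← sgn_add, hsgn]
    rw [add_comm]
    congr 3
    ring

end Superflip

section GradedSuperbiderivations

variable {n : ℕ} {i j k l m : ℤ} {f : E n →ₗ[ℂ] E n →ₗ[ℂ] E n} {x y z u v : E n}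

lemma exists_notMem_of_card_lt {S : Finset (Fin n)} (hS : S.card < n) : ∃ a, a ∉ S := by
  obtain ⟨a, -, ha⟩ := Finset.exists_mem_notMem_of_card_lt_card
    (hS.trans_eq (Finset.card_fin n).symm)
  exact ⟨a, ha⟩

/-- `f ∈ BDer(H(n))_i`: the bilinear map `f` is a super-biderivation of `H(n)` of some ℤ₂-degree
and of ℤ-degree `i`. -/
structure IsBDer (n : ℕ) (f : E n →ₗ[ℂ] E n →ₗ[ℂ] E n) (i : ℤ) : Prop where
  exists_isSuperBider : ∃ p, IsSuperBider n (CT.H.algebra n) p f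
  hasDeg : CT.H.HasDeg n f i

lemma superflip_apply_eq_zero_iff (hx : x ∈ CT.H.grade n j) (hy : y ∈ CT.H.grade n k) :
    superflip f x y = 0 ↔ f y x = 0 := by
  rw [superflip_apply (mem_epar_of_mem_edeg hx.2) (mem_epar_of_mem_edeg hy.2),
    smul_eq_zero_iff_right (sgn_ne_zero _)]

namespace IsBDer

lemma superflip (hf : IsBDer n f i) : IsBDer n (superflip f) i where
  exists_isSuperBider := hf.exists_isSuperBider.imp fun _ => IsSuperBider.superflip
  hasDeg j k x hx y hy := by
    rw [superflip_apply (mem_epar_of_mem_edeg hx.2) (mem_epar_of_mem_edeg hy.2),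
      show i + j + k = i + k + j by ring]
    exact Submodule.smul_mem _ _ (hf.hasDeg k j y hy x hx)

lemma apply_eq_zero_of_lt (hf : IsBDer n f i) (h : i + j + k < -1) (hx : x ∈ CT.H.grade n j)
    (hy : y ∈ CT.H.grade n k) : f x y = 0 :=
  eq_zero_of_mem_grade_of_lt h (hf.hasDeg j k x hx y hy)

lemma apply_sbL_eq_zero (hf : IsBDer n f i) (hx : x ∈ CT.H.grade n j) (hy : y ∈ CT.H.grade n k)
    (hz : z ∈ CT.H.grade n l) (hxy : f x y = 0) (hxz : f x z = 0) : f x (sbL n y z) = 0 := by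
  obtain ⟨p, hp⟩ := hf.exists_isSuperBider
  rw [hp.eq2 _ _ _ x (mem_algebra_inf_epar hx) y (mem_algebra_inf_epar hy) z
    (mem_algebra_inf_epar hz), hxy, hxz, map_zero, map_zero, LinearMap.zero_apply, smul_zero,
    add_zero]

lemma sbL_apply_eq_zero (hf : IsBDer n f i) (hx : x ∈ CT.H.grade n j) (hy : y ∈ CT.H.grade n k)
    (hz : z ∈ CT.H.grade n l) (hxy : f x y = 0) (hxyz : f x (sbL n y z) = 0) :
    sbL n y (f x z) = 0 := by
  obtain ⟨p, hp⟩ := hf.exists_isSuperBider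
  rw [hp.eq2 _ _ _ x (mem_algebra_inf_epar hx) y (mem_algebra_inf_epar hy) z
    (mem_algebra_inf_epar hz), hxy, map_zero, LinearMap.zero_apply, zero_add] at hxyz
  exact (smul_eq_zero.1 hxyz).resolve_left (sgn_ne_zero _)

lemma sbL_apply_sbL_eq_zero (hf : IsBDer n f i) (hx : x ∈ CT.H.grade n j)
    (hy : y ∈ CT.H.grade n k) (hu : u ∈ CT.H.grade n l) (hv : v ∈ CT.H.grade n m)
    (hfuv : sbL n (sbL n x y) (f u v) = 0) (hfuy : sbL n (f u y) (sbL n x v) = 0)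
    (hfxv : sbL n (f x v) (sbL n y u) = 0) : sbL n (f x y) (sbL n u v) = 0 := by
  obtain ⟨p, hp⟩ := hf.exists_isSuperBider
  rw [hp.sbL_apply_sbL (fun _ h _ => sbL_mem_Hn h) (mem_algebra_inf_epar hx)
    (mem_algebra_inf_epar hy) (mem_algebra_inf_epar hu) (mem_algebra_inf_epar hv), hfuv, hfuy,
    hfxv, smul_zero, smul_zero, smul_zero, add_zero, sub_zero]

lemma sbL_apply_DHmono_eq_zero (hf : IsBDer n f i) (hn : 1 < n) (hx : x ∈ CT.H.grade n j)
    (hy : y ∈ CT.H.grade n k) {S : Finset (Fin n)} {a : Fin n} (ha : a ∉ S)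
    (hS : S.card + 1 < n)
    (hfuv : sbL n (sbL n x y) (f (pd n a) (DHmono (insert a S))) = 0)
    (hfuy : sbL n (f (pd n a) y) (sbL n x (DHmono (insert a S))) = 0)
    (hfxv : sbL n (f x (DHmono (insert a S))) (sbL n y (pd n a)) = 0) :
    sbL n (f x y) (DHmono S) = 0 := by
  obtain ⟨c, hc⟩ := exists_smul_sbL_pd_DHmono ha
  have hv := DHmono_mem_grade_of_card_lt ((Finset.card_insert_of_notMem ha).trans_lt hS)
  rw [hc, map_smul, hf.sbL_apply_sbL_eq_zero hx hy (pd_mem_grade hn a) hv hfuv hfuy hfxv, smul_zero]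

end IsBDer

end GradedSuperbiderivations

section NegativePart

variable {n : ℕ} {i : ℤ} {f : E n →ₗ[ℂ] E n →ₗ[ℂ] E n} {x y : E n}

namespace IsBDer

lemma sbL_apply_pd_pd_DHmono_eq_zero (hf : IsBDer n f i) (hn : 1 < n) {a b l : Fin n}
    {S : Finset (Fin n)} (hl : l ∉ S) (hS : S.card + 1 < n)
    (h : f (pd n l) (pd n b) = 0 ∨ a ∉ insert l S) :
    sbL n (f (pd n a) (pd n b)) (DHmono S) = 0 := by
  have hpd (c d : Fin n) : sbL n (pd n c) (pd n d) = 0 :=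
    sbL_eq_zero_of_add_lt (by norm_num) (pd_mem_grade hn c) (pd_mem_grade hn d)
  refine hf.sbL_apply_DHmono_eq_zero hn (pd_mem_grade hn a) (pd_mem_grade hn b) hl hS ?_ ?_ ?_
  · rw [hpd, map_zero, LinearMap.zero_apply]
  · obtain h | h := h
    · rw [h, map_zero, LinearMap.zero_apply]
    · rw [sbL_pd_DHmono_eq_zero h, map_zero]
  · rw [hpd, map_zero]

lemma sbL_apply_pd_pd_DHmono_eq_zero_of_notMem (hf : IsBDer n f i) {a b : Fin n}
    {S : Finset (Fin n)} (hS : S.card + 1 < n) (hab : a ∉ S ∨ b ∉ S) :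
    sbL n (f (pd n a) (pd n b)) (DHmono S) = 0 := by
  have key {g : E n →ₗ[ℂ] E n →ₗ[ℂ] E n} (hg : IsBDer n g i) {c d : Fin n} (hc : c ∉ S) :
      sbL n (g (pd n c) (pd n d)) (DHmono S) = 0 := by
    obtain ⟨l, hl⟩ := exists_notMem_of_card_lt ((Finset.card_insert_of_notMem hc).trans_lt hS)
    rw [Finset.mem_insert, not_or] at hl
    refine hg.sbL_apply_pd_pd_DHmono_eq_zero (by omega) hl.2 hS (.inr ?_)
    rw [Finset.mem_insert, not_or]
    exact ⟨Ne.symm hl.1, hc⟩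
  obtain ha | hb := hab
  · exact key hf ha
  · have hflip := key hf.superflip (d := a) hb
    rwa [superflip_apply (pd_mem_epar b) (pd_mem_epar a), map_smul, LinearMap.smul_apply,
      smul_eq_zero_iff_right (sgn_ne_zero _)] at hflip

lemma apply_pd_pd_of_ne (hf : IsBDer n f i) (hn : 3 < n) {a b : Fin n} (hab : a ≠ b) :
    f (pd n a) (pd n b) = 0 := by
  refine eq_zero_of_sbL_DHmono_eq_zero (by omega)
    (hf.hasDeg _ _ _ (pd_mem_grade (by omega) a) _ (pd_mem_grade (by omega) b))
    (fun q => hf.sbL_apply_pd_pd_DHmono_eq_zero_of_notMem ?_ ?_) fun q => ?_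
  · rw [Finset.card_singleton]
    omega
  · simp only [Finset.mem_singleton]
    grind
  · obtain ⟨r, hr⟩ := exists_notMem_of_card_lt (Finset.card_le_three.trans_lt hn :
      ({a, b, q} : Finset (Fin n)).card < n)
    simp only [Finset.mem_insert, Finset.mem_singleton, not_or] at hr
    refine ⟨r, hr.2.2, hf.sbL_apply_pd_pd_DHmono_eq_zero_of_notMem ?_ ?_⟩
    · have := Finset.card_pair (Ne.symm hr.2.2)
      omega
    · simp only [Finset.mem_insert, Finset.mem_singleton]
      grind

lemma apply_pd_pd (hf : IsBDer n f i) (hn : 3 < n) (a b : Fin n) : f (pd n a) (pd n b) = 0 := by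
  obtain rfl | hab := eq_or_ne a b
  swap
  · exact hf.apply_pd_pd_of_ne hn hab
  have hbracket {S : Finset (Fin n)} (hS : S.card ≤ 2) :
      sbL n (f (pd n a) (pd n a)) (DHmono S) = 0 := by
    have hcard : (insert a S).card < n := (Finset.card_insert_le a S).trans_lt (by omega)
    obtain ⟨l, hl⟩ := exists_notMem_of_card_lt hcard
    rw [Finset.mem_insert, not_or] at hl
    exact hf.sbL_apply_pd_pd_DHmono_eq_zero (by omega) hl.2 (by omega)
      (.inl (hf.apply_pd_pd_of_ne hn hl.1))
  have : Nontrivial (Fin n) := Fin.nontrivial_iff_two_le.2 (by omega)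
  refine eq_zero_of_sbL_DHmono_eq_zero (by omega)
    (hf.hasDeg _ _ _ (pd_mem_grade (by omega) a) _ (pd_mem_grade (by omega) a))
    (fun q => hbracket (by simp)) fun q => ?_
  obtain ⟨r, hr⟩ := exists_ne q
  exact ⟨r, hr, hbracket Finset.card_le_two⟩

lemma apply_eq_zero_of_mem_grade_neg_one (hf : IsBDer n f i) (hn : 3 < n)
    (hx : x ∈ CT.H.grade n (-1)) (hy : y ∈ CT.H.grade n (-1)) : f x y = 0 :=
  map_eq_zero_of_mem_grade_neg_one (f x) (fun b =>
    map_eq_zero_of_mem_grade_neg_one (f.flip (pd n b)) (fun a => hf.apply_pd_pd hn a b) hx) hy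

end IsBDer

end NegativePart

section Reduction

variable {n : ℕ} {i j k : ℤ} {f : E n →ₗ[ℂ] E n →ₗ[ℂ] E n} {x y : E n}

namespace IsBDer

lemma apply_eq_zero_of_pd (hf : IsBDer n f i) (hn : 1 < n) (hijk : 0 ≤ i + j + k)
    (hx : x ∈ CT.H.grade n j) (hy : y ∈ CT.H.grade n k) (hpd : ∀ l, f x (pd n l) = 0)
    (hsbL : ∀ l, f x (sbL n (pd n l) y) = 0) : f x y = 0 :=
  eq_zero_of_mem_grade_of_sbL_pd_eq_zero hijk (hf.hasDeg j k x hx y hy) fun l =>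
    hf.sbL_apply_eq_zero hx (pd_mem_grade hn l) hy (hpd l) (hsbL l)

lemma apply_eq_zero_of_add_eq_neg_one (hf : IsBDer n f i) (hn : 3 < n)
    (h : ∀ j k, i + j + k = -1 → ∀ x ∈ CT.H.grade n j, ∀ y ∈ CT.H.grade n k, f x y = 0)
    (hx : x ∈ CT.H.grade n j) (hy : y ∈ CT.H.grade n k) : f x y = 0 := by
  induction hN : (j + k + 2).toNat using Nat.strong_induction_on generalizing j k x y with
  | h N ih =>
    obtain hj | hj := lt_or_ge j (-1)
    · rw [eq_zero_of_mem_grade_of_lt hj hx, map_zero, LinearMap.zero_apply]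
    obtain hk | hk := lt_or_ge k (-1)
    · rw [eq_zero_of_mem_grade_of_lt hk hy, map_zero]
    obtain hijk | hijk | hijk := lt_trichotomy (i + j + k) (-1)
    · exact hf.apply_eq_zero_of_lt hijk hx hy
    · exact h j k hijk x hx y hy
    have hpd := pd_mem_grade (n := n) (by omega)
    obtain hk | rfl := hk.lt_or_eq'
    · exact hf.apply_eq_zero_of_pd (by omega) (by omega) hx hy
        (fun l => ih _ (by omega) hx (hpd l) rfl)
        fun l => ih _ (by omega) hx (sbL_mem_grade (hpd l) hy) rfl
    obtain hj | rfl := hj.lt_or_eq'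
    · rw [← superflip_apply_eq_zero_iff hy hx]
      refine hf.superflip.apply_eq_zero_of_pd (by omega) (by omega) hy hx (fun l => ?_) fun l => ?_
      · rw [superflip_apply_eq_zero_iff hy (hpd l)]
        exact ih _ (by omega) (hpd l) hy rfl
      · have hlx := sbL_mem_grade (hpd l) hx
        rw [superflip_apply_eq_zero_iff hy hlx]
        exact ih _ (by omega) hlx hy rfl
    · exact hf.apply_eq_zero_of_mem_grade_neg_one hn hx hy

lemma apply_eq_zero_of_pos (hf : IsBDer n f i) (hn : 3 < n) (hi : 0 < i)
    (hx : x ∈ CT.H.grade n j) (hy : y ∈ CT.H.grade n k) : f x y = 0 := by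
  refine hf.apply_eq_zero_of_add_eq_neg_one hn (fun j k hijk x hx y hy => ?_) hx hy
  obtain hj | hk | ⟨rfl, rfl⟩ : j < -1 ∨ k < -1 ∨ j = -1 ∧ k = -1 := by omega
  · rw [eq_zero_of_mem_grade_of_lt hj hx, map_zero, LinearMap.zero_apply]
  · rw [eq_zero_of_mem_grade_of_lt hk hy, map_zero]
  · exact hf.apply_eq_zero_of_mem_grade_neg_one hn hx hy

end IsBDer

end Reduction

section NegativeDegree

variable {n : ℕ} {i j k : ℤ} {f : E n →ₗ[ℂ] E n →ₗ[ℂ] E n} {x y : E n}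

namespace IsBDer

lemma apply_DHmono_eq_zero_of_ne (hf : IsBDer n f i) (hn : 3 < n) (hi : i < 0) (hk : i + k ≠ -1)
    {S : Finset (Fin n)} (hS : S.card = 2) (hy : y ∈ CT.H.grade n k) : f (DHmono S) y = 0 := by
  have hx : DHmono S ∈ CT.H.grade n 0 := by
    simpa [hS] using DHmono_mem_grade_of_card_lt (hS.trans_lt (by omega))
  have hxy := hf.hasDeg _ _ _ hx _ hy
  rw [add_zero] at hxy
  refine eq_zero_of_sbL_DHmono_single_eq_zero (by omega) hk hxy fun q => ?_
  obtain ⟨l, hl⟩ := exists_notMem_of_card_lt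
    ((Finset.card_insert_le q S).trans_lt (by omega : S.card + 1 < n))
  rw [Finset.mem_insert, not_or] at hl
  obtain ⟨c, hc⟩ := exists_smul_sbL_DHmono_pd (Finset.notMem_singleton.2 hl.1)
  have hu := DHmono_pair_mem_grade_zero (by omega) hl.1
  have hv := pd_mem_grade (n := n) (by omega) l
  rw [hc, map_smul, hf.sbL_apply_sbL_eq_zero hx hy hu hv, smul_zero]
  · rw [hf.apply_eq_zero_of_lt (by omega) hu hv, map_zero]
  · rw [(sbL_eq_zero_comm_of_mem_grade hx hv).2 (sbL_pd_DHmono_eq_zero hl.2), map_zero]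
  · rw [hf.apply_eq_zero_of_lt (by omega) hx hv, map_zero, LinearMap.zero_apply]

lemma apply_eq_zero_of_mem_grade_zero_of_ne (hf : IsBDer n f i) (hn : 3 < n) (hi : i < 0)
    (hk : i + k ≠ -1) (hx : x ∈ CT.H.grade n 0) (hy : y ∈ CT.H.grade n k) : f x y = 0 :=
  map_eq_zero_of_mem_grade (f.flip y)
    (fun _ _ hS => hf.apply_DHmono_eq_zero_of_ne hn hi hk (by omega) hy) hx

lemma apply_eq_zero_of_mem_grade_zero_of_lt (hf : IsBDer n f i) (hn : 3 < n) (hi : i < -2)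
    (hk : i + k = -1) (hx : x ∈ CT.H.grade n 0) (hy : y ∈ CT.H.grade n k) : f x y = 0 := by
  have hxy := hf.hasDeg _ _ _ hx _ hy
  rw [add_zero, hk] at hxy
  have : Nontrivial (Fin n) := Fin.nontrivial_iff_two_le.2 (by omega)
  refine eq_zero_of_sbL_DHmono_pair_eq_zero (by omega) hxy fun q => ?_
  obtain ⟨r, hr⟩ := exists_ne q
  have hcard := Finset.card_pair hr.symm
  obtain ⟨l, hl⟩ := exists_notMem_of_card_lt (hcard.trans_lt (by omega))
  have hu := pd_mem_grade (n := n) (by omega) l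
  have hv := DHmono_mem_grade_of_card_lt (n := n) (S := insert l {q, r})
    (by rw [Finset.card_insert_of_notMem hl]; omega)
  rw [Finset.card_insert_of_notMem hl, hcard] at hv
  refine ⟨r, hr, hf.sbL_apply_DHmono_eq_zero (by omega) hx hy hl (by omega) ?_ ?_ ?_⟩
  · rw [hf.apply_eq_zero_of_lt (by push_cast; omega) hu hv, map_zero]
  · rw [hf.apply_eq_zero_of_lt (by omega) hu hy, map_zero, LinearMap.zero_apply]
  · rw [hf.apply_eq_zero_of_lt (by push_cast; omega) hx hv, map_zero, LinearMap.zero_apply]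

lemma apply_eq_zero_of_mem_grade_zero_of_ge (hf : IsBDer n f i) (hn : 4 < n) (hi : i < 0)
    (hi' : -2 ≤ i) (hk : i + k = -1) (hx : x ∈ CT.H.grade n 0) (hy : y ∈ CT.H.grade n k) :
    f x y = 0 := by
  refine map_eq_zero_of_mem_grade (f x) (fun T _ hT => ?_) hy
  obtain ⟨l, hl⟩ := exists_notMem_of_card_lt (by omega : T.card < n)
  obtain ⟨c, hc⟩ := exists_smul_sbL_DHmono_pd hl
  have hcard := Finset.card_insert_of_notMem hl
  have hu := DHmono_mem_grade_of_card_lt (hcard.trans_lt (by omega))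
  have hv := pd_mem_grade (n := n) (by omega) l
  rw [hc, map_smul, hf.apply_sbL_eq_zero hx hu hv, smul_zero]
  · exact hf.apply_eq_zero_of_mem_grade_zero_of_ne (by omega) hi (by omega) hx hu
  · exact hf.apply_eq_zero_of_lt (by omega) hx hv

lemma apply_eq_zero_of_mem_grade_zero (hf : IsBDer n f i) (hn : 4 < n) (hi : i < 0)
    (hx : x ∈ CT.H.grade n 0) (hy : y ∈ CT.H.grade n k) : f x y = 0 := by
  obtain hk | hk := ne_or_eq (i + k) (-1)
  · exact hf.apply_eq_zero_of_mem_grade_zero_of_ne (by omega) hi hk hx hy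
  obtain hi' | hi' := lt_or_ge i (-2)
  · exact hf.apply_eq_zero_of_mem_grade_zero_of_lt (by omega) hi' hk hx hy
  · exact hf.apply_eq_zero_of_mem_grade_zero_of_ge hn hi hi' hk hx hy

lemma apply_eq_zero_of_neg (hf : IsBDer n f i) (hn : 4 < n) (hi : i < 0)
    (hx : x ∈ CT.H.grade n j) (hy : y ∈ CT.H.grade n k) : f x y = 0 := by
  refine hf.apply_eq_zero_of_add_eq_neg_one (by omega) (fun j k hijk x hx y hy => ?_) hx hy
  have hxy := hf.hasDeg _ _ _ hx _ hy
  rw [hijk] at hxy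
  have : Nontrivial (Fin n) := Fin.nontrivial_iff_two_le.2 (by omega)
  refine eq_zero_of_Hn_apply_mono_single hxy.1 fun b => ?_
  obtain ⟨a, hab⟩ := exists_ne b
  obtain ⟨d, hd⟩ := exists_notMem_of_card_lt
    (Finset.card_le_three.trans_lt (by omega) : ({a, b, cidx n a} : Finset (Fin n)).card < n)
  simp only [Finset.mem_insert, Finset.mem_singleton, not_or] at hd
  have hu := DHmono_pair_mem_grade_zero (by omega) hab.symm
  have hv := DHmono_pair_mem_grade_zero (by omega) (Ne.symm hd.2.2)
  refine apply_mono_single_eq_zero_of_sbL_sbL_pair (by omega) hxy hab.symm hd.1 hd.2.1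
    (Ne.symm hd.2.2) (hf.sbL_apply_sbL_eq_zero hx hy hu hv ?_ ?_ ?_)
  · rw [hf.apply_eq_zero_of_mem_grade_zero hn hi hu hv, map_zero]
  · rw [hf.apply_eq_zero_of_mem_grade_zero hn hi hu hy, map_zero, LinearMap.zero_apply]
  · rw [(superflip_apply_eq_zero_iff hv hx).1
      (hf.superflip.apply_eq_zero_of_mem_grade_zero hn hi hv hx), map_zero, LinearMap.zero_apply]

end IsBDer

end NegativeDegree

/-- For `L = H(n)`, `n > 4`, a super-biderivation `f ∈ BDer(L)_i` of
nonzero ℤ-degree `i` is the zero map. -/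
theorem superBider_H_nonzero_degree_vanishes (n : ℕ) (hn : 4 < n)
    (pf : ZMod 2) (f : E n →ₗ[ℂ] E n →ₗ[ℂ] E n)
    (hf : IsSuperBider n (CT.H.algebra n) pf f)
    (i : ℤ) (hi : i ≠ 0) (hd : CT.H.HasDeg n f i) :
    ∀ x ∈ CT.H.algebra n, ∀ y ∈ CT.H.algebra n, f x y = 0 := by
  have hfi : IsBDer n f i := ⟨⟨pf, hf⟩, hd⟩
  have hgrade (j k : ℤ) (x : E n) (hx : x ∈ CT.H.grade n j) (y : E n) (hy : y ∈ CT.H.grade n k) :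
      f x y = 0 := by
    obtain hi | hi := lt_or_gt_of_ne hi
    · exact hfi.apply_eq_zero_of_neg hn hi hx hy
    · exact hfi.apply_eq_zero_of_pos (by omega) hi hx hy
  intro x hx y hy
  exact map_eq_zero_of_mem_Hn (f x) (fun k y hy =>
    map_eq_zero_of_mem_Hn (f.flip y) (fun j x hx => hgrade j k x hx y hy) hx) hy

end CartanSuper
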